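/- arXiv:1808.06333 — 9 statements merged into one kernel-verified Lean document; each statement's English description precedes it below -/
import Mathlib

section
/- Let A be a semisimple unital complex Banach algebra and let S denote the set of finite-rank elements of A (which, by a theorem of Aupetit and Mouton, coincides with the socle Soc A). If S is a closed subset of A, then there exists a nonnegative integer n such that rank(a) ≤ n for every a ∈ S. -/
open scoped ENNReal

/-- The spectral rank of an element of a complex algebra:
`rank a = sup_{x ∈ A} #σ'(x·a)`, where `σ'` is the nonzero spectrum and `#` is
the extended cardinality. -/
noncomputable def spectralRank {A : Type*} [Ring A] [Algebra ℂ A] (a : A) : ℕ∞ :=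
  ⨆ x : A, ((spectrum ℂ (x * a)) \ {0}).encard
open Filter Topology

/-- Lipschitz-type control of the resolvent on the unit circle. -/
def CircLip {A : Type*} [NormedRing A] [NormedAlgebra ℂ A] (b : A) (L : ℝ) : Prop :=
  (∀ w : ℂ, ‖w‖ = 1 → IsUnit (1 - w • b)) ∧
  ∀ w v : ℂ, ‖w‖ = 1 → ‖v‖ = 1 →
    ‖Ring.inverse (1 - w • b) - Ring.inverse (1 - v • b)‖ ≤ L * ‖w - v‖

section
variable {A : Type*} [NormedRing A] [NormedAlgebra ℂ A]

theorem inv_sq_aux {b : A} (h : ∀ w : ℂ, ‖w‖ = 1 → IsUnit (1 - w • b)) (s : ℂ) (hs : ‖s‖ = 1) :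
    IsUnit (1 - (s ^ 2) • b ^ 2) ∧
    Ring.inverse (1 - (s ^ 2) • b ^ 2)
      = Ring.inverse (1 - s • b) * Ring.inverse (1 - (-s) • b) ∧
    Ring.inverse (1 - (s ^ 2) • b ^ 2)
      = (1 / 2 : ℂ) • (Ring.inverse (1 - s • b) + Ring.inverse (1 - (-s) • b)) := by
  have hm : ‖-s‖ = 1 := by rwa [norm_neg]
  obtain ⟨x, hx⟩ := h s hs
  obtain ⟨y, hy⟩ := h (-s) hm
  have hc : (1 - s • b) * (1 - (-s) • b) = 1 - (s ^ 2) • b ^ 2 := by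
    simp only [neg_smul, sub_neg_eq_add, mul_add, sub_mul, mul_one, one_mul, smul_mul_smul_comm,
      pow_two]
    abel
  have hc' : (1 - (-s) • b) * (1 - s • b) = 1 - (s ^ 2) • b ^ 2 := by
    simp only [neg_smul, sub_neg_eq_add, mul_sub, add_mul, mul_one, one_mul, smul_mul_smul_comm,
      pow_two]
    abel
  have e1 : ((y * x : Aˣ) : A) = 1 - (s ^ 2) • b ^ 2 := by rw [Units.val_mul, hx, hy, hc']
  have e2 : Ring.inverse (1 - (s ^ 2) • b ^ 2) = (↑x⁻¹ : A) * ↑y⁻¹ := by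
    rw [← e1, Ring.inverse_unit, mul_inv_rev, Units.val_mul]
  refine ⟨⟨y * x, e1⟩, ?_, ?_⟩
  · rw [e2, ← hx, ← hy, Ring.inverse_unit, Ring.inverse_unit]
  · rw [e2, ← hx, ← hy, Ring.inverse_unit, Ring.inverse_unit]
    have h2 : (x : A) + y = (2 : ℂ) • 1 := by
      rw [hx, hy, two_smul, neg_smul]; abel
    have h3 : (↑x⁻¹ : A) + ↑y⁻¹ = ↑x⁻¹ * ((x : A) + y) * ↑y⁻¹ := by
      rw [mul_add, add_mul]; simp [mul_assoc, add_comm]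
    rw [h3, h2]
    simp [smul_smul]

theorem circLip_sq {b : A} {L : ℝ} (hL : 0 ≤ L) (h : CircLip b L) : CircLip (b ^ 2) (3 / 4 * L) := by
  have sq : ∀ w : ℂ, ‖w‖ = 1 → ∃ s : ℂ, ‖s‖ = 1 ∧ s ^ 2 = w := by
    intro w hw
    obtain ⟨s, hs⟩ := IsAlgClosed.exists_pow_nat_eq w (n := 2) (by norm_num)
    refine ⟨s, ?_, hs⟩
    have : ‖s‖ ^ 2 = 1 := by rw [← norm_pow, hs, hw]
    exact (pow_eq_one_iff_of_nonneg (norm_nonneg s) (by norm_num)).1 this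
  refine ⟨?_, ?_⟩
  · intro w hw
    obtain ⟨s, hs, rfl⟩ := sq w hw
    exact (inv_sq_aux h.1 s hs).1
  · have key : ∀ s t : ℂ, ‖s‖ = 1 → ‖t‖ = 1 → ‖s - t‖ ≤ ‖s + t‖ →
      ‖Ring.inverse (1 - (s ^ 2) • b ^ 2) - Ring.inverse (1 - (t ^ 2) • b ^ 2)‖
        ≤ 3 / 4 * L * ‖s ^ 2 - t ^ 2‖ := by
      intro s t hs ht hst
      rw [(inv_sq_aux h.1 s hs).2.2, (inv_sq_aux h.1 t ht).2.2, ← smul_sub, norm_smul]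
      have a1 := h.2 s t hs ht
      have a2 := h.2 (-s) (-t) (by rwa [norm_neg]) (by rwa [norm_neg])
      have a3 : ‖(-s) - (-t)‖ = ‖s - t‖ := by rw [← norm_neg]; congr 1; ring
      rw [a3] at a2
      have a4 : ‖s ^ 2 - t ^ 2‖ = ‖s + t‖ * ‖s - t‖ := by rw [← norm_mul]; congr 1; ring
      have a5 := parallelogram_law_with_norm ℝ s t
      rw [hs, ht] at a5
      have a6 : 4 / 3 ≤ ‖s + t‖ := by
        by_contra hh
        push Not at hh
        nlinarith [norm_nonneg (s + t), norm_nonneg (s - t)]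
      rw [add_sub_add_comm, a4]
      have a7 := norm_add_le (Ring.inverse (1 - s • b) - Ring.inverse (1 - t • b))
        (Ring.inverse (1 - (-s) • b) - Ring.inverse (1 - (-t) • b))
      have a8 : ‖(1 / 2 : ℂ)‖ = 1 / 2 := by norm_num
      rw [a8]
      have a9 : 0 ≤ L * ‖s - t‖ := by positivity
      nlinarith
    intro w v hw hv
    obtain ⟨s, hs, rfl⟩ := sq w hw
    obtain ⟨t, ht, rfl⟩ := sq v hv
    rcases le_total ‖s - t‖ ‖s + t‖ with hh | hh
    · exact key s t hs ht hh
    · have := key s (-t) hs (by rwa [norm_neg]) (by simpa [← sub_eq_add_neg] using hh)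
      simpa using this

theorem exists_circLip [CompleteSpace A] (a : A) (h : ∀ z ∈ spectrum ℂ a, ‖z‖ ≠ 1) :
    ∃ L, 0 ≤ L ∧ CircLip a L := by
  have hu : ∀ w : ℂ, ‖w‖ = 1 → IsUnit (1 - w • a) := by
    intro w hw
    have hw0 : w ≠ 0 := by rintro rfl; simp at hw
    have : w⁻¹ ∉ spectrum ℂ a := fun hm => h _ hm (by simp [hw])
    rw [spectrum.notMem_iff] at this
    have h2 := (this.smul (Units.mk0 w hw0))
    rwa [smul_sub, Units.smul_def, Units.smul_def, Units.val_mk0, Algebra.algebraMap_eq_smul_one,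
      smul_smul, mul_inv_cancel₀ hw0, one_smul] at h2
  have hcont : ContinuousOn (fun w : ℂ => Ring.inverse (1 - w • a)) (Metric.sphere 0 1) := by
    intro w hw
    obtain ⟨x, hx⟩ := hu w (by simpa using hw)
    have h1 : ContinuousAt Ring.inverse (1 - w • a) := by
      rw [← hx]; exact NormedRing.inverse_continuousAt x
    have h2 : ContinuousAt (fun w : ℂ => 1 - w • a) w := by fun_prop
    exact (ContinuousAt.comp (f := fun w : ℂ => 1 - w • a) h1 h2).continuousWithinAt
  obtain ⟨M, hM⟩ := (isCompact_sphere (0 : ℂ) 1).exists_bound_of_continuousOn hcont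
  refine ⟨M * ‖a‖ * M, ?_, hu, ?_⟩
  · have : 0 ≤ M := (norm_nonneg _).trans (hM 1 (by simp))
    positivity
  · intro w v hw hv
    have m1 := hM w (by simpa using hw)
    have m2 := hM v (by simpa using hv)
    have hM0 : 0 ≤ M := (norm_nonneg _).trans m1
    obtain ⟨x, hx⟩ := hu w hw
    obtain ⟨y, hy⟩ := hu v hv
    simp only [← hx, ← hy, Ring.inverse_unit] at m1 m2 ⊢
    have h3 : (↑x⁻¹ : A) - ↑y⁻¹ = ↑x⁻¹ * ((w - v) • a) * ↑y⁻¹ := by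
      have : (w - v) • a = (y : A) - x := by rw [hx, hy, sub_smul]; abel
      rw [this, mul_sub, sub_mul]; simp [mul_assoc]
    rw [h3]
    calc _ ≤ ‖(↑x⁻¹ : A)‖ * ‖(w - v) • a‖ * ‖(↑y⁻¹ : A)‖ := norm_mul₃_le
      _ ≤ M * ‖(w - v) • a‖ * M := by gcongr
      _ = _ := by rw [norm_smul]; ring

/-- Riesz idempotent for the unit circle. -/
theorem riesz [CompleteSpace A] (a : A) (h : ∀ z ∈ spectrum ℂ a, ‖z‖ ≠ 1) :
    ∃ (e : ℕ → A) (P : A), P * P = P ∧ Tendsto e atTop (𝓝 P) ∧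
      (∀ k, e k * (1 - a ^ 2 ^ k) = 1) ∧ (∀ k, (1 - a ^ 2 ^ k) * e k = 1) := by
  obtain ⟨L, hL, hl⟩ := exists_circLip a h
  have hk : ∀ k : ℕ, CircLip (a ^ 2 ^ k) ((3 / 4) ^ k * L) := by
    intro k
    induction k with
    | zero => simpa using hl
    | succ k ih =>
      have := circLip_sq (by positivity) ih
      rwa [← pow_mul, ← pow_succ, ← mul_assoc, ← pow_succ'] at this
  set e : ℕ → A := fun k => Ring.inverse (1 - a ^ 2 ^ k) with he
  set f : ℕ → A := fun k => Ring.inverse (1 - (-1 : ℂ) • a ^ 2 ^ k) with hf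
  have hu : ∀ k, IsUnit (1 - a ^ 2 ^ k) := fun k => by
    simpa using (hk k).1 1 (by simp)
  have hstep : ∀ k, e (k + 1) = e k * f k ∧ e (k + 1) = (1 / 2 : ℂ) • (e k + f k) := by
    intro k
    have := (inv_sq_aux (hk k).1 1 (by simp)).2
    rw [← pow_mul, ← pow_succ, one_pow, one_smul, one_smul] at this
    exact this
  have hd : ∀ k, ‖e k - f k‖ ≤ (3 / 4) ^ k * L * 2 := by
    intro k
    have := (hk k).2 1 (-1) (by simp) (by simp)
    have h2 : ‖(1 : ℂ) - (-1)‖ = 2 := by norm_num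
    rw [h2, one_smul] at this
    exact this
  have hcau : CauchySeq e := by
    refine cauchySeq_of_le_geometric (3 / 4) L (by norm_num) ?_
    intro k
    have : e k - e (k + 1) = (1 / 2 : ℂ) • (e k - f k) := by
      rw [(hstep k).2]; module
    rw [dist_eq_norm, this, norm_smul]
    have a8 : ‖(1 / 2 : ℂ)‖ = 1 / 2 := by norm_num
    rw [a8]
    linarith [hd k]
  obtain ⟨P, hP⟩ := cauchySeq_tendsto_of_complete hcau
  have hdz : Tendsto (fun k => e k - f k) atTop (𝓝 0) := by
    refine squeeze_zero_norm hd ?_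
    have := tendsto_pow_atTop_nhds_zero_of_lt_one (r := (3 / 4 : ℝ)) (by norm_num) (by norm_num)
    simpa using (this.mul_const L).mul_const 2
  have hfP : Tendsto f atTop (𝓝 P) := by
    have := hP.sub hdz
    simpa using this
  refine ⟨e, P, ?_, hP, fun k => Ring.inverse_mul_cancel _ (hu k),
    fun k => Ring.mul_inverse_cancel _ (hu k)⟩
  have h1 := hP.comp (tendsto_add_atTop_nat 1)
  have h2 := hP.mul hfP
  refine tendsto_nhds_unique (h2.congr fun k => ?_) h1
  simp [(hstep k).1]

theorem riesz_ne_one {a : A} [CompleteSpace A] {e : ℕ → A} {P : A} (ht : Tendsto e atTop (𝓝 P))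
    (h1 : ∀ k, e k * (1 - a ^ 2 ^ k) = 1) (h2 : ∀ k, (1 - a ^ 2 ^ k) * e k = 1)
    {z : ℂ} (hz : z ∈ spectrum ℂ a) (hz1 : 1 < ‖z‖) : P ≠ 1 := by
  rintro rfl
  have hi : Tendsto (fun k => Ring.inverse (e k)) atTop (𝓝 (Ring.inverse (1 : A))) := by
    have := NormedRing.inverse_continuousAt (1 : Aˣ)
    rw [Units.val_one] at this
    exact this.tendsto.comp ht
  have hi2 : ∀ k, Ring.inverse (e k) = 1 - a ^ 2 ^ k := fun k =>
    Ring.inverse_unit ⟨e k, 1 - a ^ 2 ^ k, h1 k, h2 k⟩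
  simp only [hi2, Ring.inverse_one] at hi
  have h3 : Tendsto (fun k => ‖a ^ 2 ^ k‖ * ‖(1 : A)‖) atTop (𝓝 0) := by
    have := (((tendsto_const_nhds (x := (1 : A))).sub hi).norm).mul_const ‖(1 : A)‖
    simpa using this
  have h4 := h3.eventually (gt_mem_nhds (zero_lt_one' ℝ))
  obtain ⟨k, hk⟩ := h4.exists
  have h5 := spectrum.norm_le_norm_mul_of_mem (spectrum.pow_mem_pow a (2 ^ k) hz)
  rw [norm_pow] at h5
  have := one_le_pow₀ hz1.le (n := 2 ^ k)
  linarith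

theorem riesz_ne_zero {a : A} [CompleteSpace A] {e : ℕ → A} {P : A} (ht : Tendsto e atTop (𝓝 P))
    (h1 : ∀ k, e k * (1 - a ^ 2 ^ k) = 1) (h2 : ∀ k, (1 - a ^ 2 ^ k) * e k = 1)
    (hz : (0 : ℂ) ∈ spectrum ℂ a) : P ≠ 0 := by
  rintro rfl
  have hi : Tendsto (fun k => 1 - e k) atTop (𝓝 1) := by
    simpa using (tendsto_const_nhds (x := (1 : A))).sub ht
  have := hi.eventually (Units.isOpen.mem_nhds (show IsUnit (1 : A) from isUnit_one))
  obtain ⟨k, hk⟩ := this.exists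
  have e1 : 1 - e k = (-e k) * a ^ 2 ^ k := by
    rw [← h1 k]; noncomm_ring
  have e2 : 1 - e k = a ^ 2 ^ k * (-e k) := by
    rw [← h2 k]; noncomm_ring
  obtain ⟨u, hu⟩ := hk
  have l1 : ((↑u⁻¹ : A) * (-e k)) * a ^ 2 ^ k = 1 := by
    rw [mul_assoc, ← e1, ← hu, Units.inv_mul]
  have l2 : a ^ 2 ^ k * ((-e k) * (↑u⁻¹ : A)) = 1 := by
    rw [← mul_assoc, ← e2, ← hu, Units.mul_inv]
  have h3 : IsUnit (a ^ 2 ^ k) :=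
    isUnit_iff_exists_and_exists.2 ⟨⟨_, l2⟩, ⟨_, l1⟩⟩
  rw [isUnit_pow_iff (by positivity)] at h3
  exact (spectrum.zero_mem_iff ℂ).1 hz h3
end
/-- Semisimplicity, in terms of spectra. -/
def SSimple (A : Type*) [Ring A] [Algebra ℂ A] : Prop :=
  ∀ a : A, (∀ x : A, ∀ z ∈ spectrum ℂ (x * a), z = 0) → a = 0

section
variable {A : Type*} [NormedRing A] [NormedAlgebra ℂ A]

theorem exists_radius (s : Set ℝ) (hs : s.Finite) {R : ℝ} (hR : 0 < R) :
    ∃ ρ, 0 < ρ ∧ ρ < R ∧ ρ ∉ s := by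
  obtain ⟨ρ, h1, h2⟩ := ((Set.Ioo_infinite hR).sdiff hs).nonempty
  exact ⟨ρ, h1.1, h1.2, h2⟩

theorem mem_spectrum_scale {a : A} {c ρ z : ℂ} (hρ : ρ ≠ 0) :
    z ∈ spectrum ℂ (ρ⁻¹ • (a - algebraMap ℂ A c)) ↔ c + ρ * z ∈ spectrum ℂ a := by
  have e : algebraMap ℂ A z - ρ⁻¹ • (a - algebraMap ℂ A c)
      = ρ⁻¹ • (algebraMap ℂ A (c + ρ * z) - a) := by
    simp only [Algebra.algebraMap_eq_smul_one, smul_sub, add_smul, smul_smul, smul_add]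
    rw [← mul_assoc, inv_mul_cancel₀ hρ, one_mul]
    abel
  rw [spectrum.mem_iff, spectrum.mem_iff, e]
  have := isUnit_smul_iff (Units.mk0 ρ⁻¹ (inv_ne_zero hρ)) (algebraMap ℂ A (c + ρ * z) - a)
  rw [Units.smul_def, Units.val_mk0] at this
  rw [this]

theorem split [CompleteSpace A] (u : A) (hfin : (spectrum ℂ u).Finite) {z w : ℂ}
    (hz : z ∈ spectrum ℂ u) (hw : w ∈ spectrum ℂ u) (hne : z ≠ w) :
    ∃ f : A, f * f = f ∧ f ≠ 0 ∧ f ≠ 1 := by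
  obtain ⟨ρ, h0, hR, hs⟩ := exists_radius ((fun t => ‖t - z‖) '' spectrum ℂ u) (hfin.image _)
    (norm_pos_iff.2 (sub_ne_zero.2 hne.symm))
  have hρ : (ρ : ℂ) ≠ 0 := by exact_mod_cast h0.ne'
  set a : A := (ρ : ℂ)⁻¹ • (u - algebraMap ℂ A z) with ha
  obtain ⟨e, P, hP, ht, h1, h2⟩ := riesz a (by
    intro t ht h1
    rw [mem_spectrum_scale hρ] at ht
    apply hs
    refine ⟨_, ht, ?_⟩
    simp [h1, abs_of_pos h0])
  refine ⟨P, hP, ?_, ?_⟩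
  · apply riesz_ne_zero ht h1 h2
    rw [mem_spectrum_scale hρ]; simpa using hz
  · apply riesz_ne_one ht h1 h2 (z := (w - z) / ρ)
    · rw [mem_spectrum_scale hρ]; field_simp; simpa using hw
    · rw [norm_div, Complex.norm_real, Real.norm_eq_abs, abs_of_pos h0]
      rwa [one_lt_div h0]

theorem all_scalar [CompleteSpace A] (hss : SSimple A) (hfin : ∀ u : A, (spectrum ℂ u).Finite)
    (hid : ∀ f : A, f * f = f → f = 0 ∨ f = 1) (x : A) : ∃ c : ℂ, x = c • 1 := by
  rcases subsingleton_or_nontrivial A with hA | hA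
  · exact ⟨0, Subsingleton.elim _ _⟩
  have huniq : ∀ u : A, ∀ z ∈ spectrum ℂ u, ∀ w ∈ spectrum ℂ u, z = w := by
    intro u z hz w hw
    by_contra hne
    obtain ⟨f, hf, h0, h1⟩ := split u (hfin u) hz hw hne
    rcases hid f hf with h | h <;> contradiction
  obtain ⟨c, hc⟩ := spectrum.nonempty x
  have hzero : ∀ u : A, ∀ z ∈ spectrum ℂ u, z ≠ 0 → IsUnit u := by
    intro u z hz h0
    by_contra hn
    exact h0 (huniq u z hz 0 ((spectrum.zero_mem_iff ℂ).2 hn))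
  refine ⟨c, ?_⟩
  have hn : ¬ IsUnit (x - c • (1 : A)) := by
    have := spectrum.mem_iff.1 hc
    rwa [← neg_sub, IsUnit.neg_iff, Algebra.algebraMap_eq_smul_one] at this
  rw [← sub_eq_zero]
  apply hss
  intro y z hz
  by_contra h0
  apply hn
  have u1 := hzero _ z hz h0
  have hz2 : z ∈ spectrum ℂ ((x - c • 1) * y) \ {0} := by
    rw [spectrum.nonzero_mul_comm]; exact ⟨hz, h0⟩
  have u2 := hzero _ z hz2.1 h0
  obtain ⟨v1, e1⟩ := u1
  obtain ⟨v2, e2⟩ := u2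
  refine isUnit_iff_exists_and_exists.2 ⟨⟨y * ↑v2⁻¹, ?_⟩, ⟨↑v1⁻¹ * y, ?_⟩⟩
  · rw [← mul_assoc, ← e2, Units.mul_inv]
  · rw [mul_assoc, ← e1, Units.inv_mul]

end

/-- Data realising the corner `q A q` as a Banach algebra. -/
theorem exists_corner.{u} {A : Type u} [NormedRing A] [NormedAlgebra ℂ A] [CompleteSpace A]
    (q : A) (hq : IsIdempotentElem q) :
    ∃ (B : Type u) (_ : NormedRing B) (_ : NormedAlgebra ℂ B) (_ : CompleteSpace B) (φ : B →ₗ[ℂ] A),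
      Function.Injective φ ∧ (∀ x y, φ (x * y) = φ x * φ y) ∧ φ 1 = q ∧
      (∀ a, q * a = a → a * q = a → ∃ b, φ b = a) := by
  let m : Module ℂ hq.Corner :=
    { smul := fun c x => ⟨c • x.1, by
        rw [Subsemigroup.mem_corner_iff hq]
        have := (Subsemigroup.mem_corner_iff hq).1 x.2
        rw [mul_smul_comm, smul_mul_assoc, this.1, this.2]; exact ⟨rfl, rfl⟩⟩
      one_smul := fun x => Subtype.ext (one_smul ℂ x.1)
      mul_smul := fun c d x => Subtype.ext (mul_smul c d x.1)
      smul_zero := fun c => Subtype.ext (smul_zero c)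
      smul_add := fun c x y => Subtype.ext (smul_add c x.1 y.1)
      add_smul := fun c d x => Subtype.ext (add_smul c d x.1)
      zero_smul := fun x => Subtype.ext (zero_smul ℂ x.1) }
  let alg : Algebra ℂ hq.Corner := Algebra.ofModule
    (fun c x y => Subtype.ext (smul_mul_assoc c x.1 y.1))
    (fun c x y => Subtype.ext (mul_smul_comm c x.1 y.1))
  let φ : hq.Corner →ₙₐ[ℂ] A :=
    { toFun := fun x => x.1
      map_smul' := fun c x => rfl
      map_zero' := rfl
      map_add' := fun x y => rfl
      map_mul' := fun x y => rfl }
  have hφ : Function.Injective φ := Subtype.val_injective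
  let nr : NormedRing hq.Corner := NormedRing.induced hq.Corner A φ hφ
  let na : NormedAlgebra ℂ hq.Corner := NormedAlgebra.induced ℂ hq.Corner A φ
  have hiso : Isometry φ := by
    refine AddMonoidHomClass.isometry_of_norm φ (fun x => rfl)
  have hrange : Set.range φ = {a | q * a = a ∧ a * q = a} := by
    ext a
    constructor
    · rintro ⟨x, rfl⟩; exact (Subsemigroup.mem_corner_iff hq).1 x.2
    · intro h; exact ⟨⟨a, (Subsemigroup.mem_corner_iff hq).2 h⟩, rfl⟩
  have hc : IsClosed (Set.range φ) := by
    rw [hrange]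
    exact (isClosed_eq (by fun_prop) continuous_id).inter (isClosed_eq (by fun_prop) continuous_id)
  have hcs : CompleteSpace hq.Corner := by
    rw [completeSpace_iff_isComplete_range hiso.isUniformInducing]
    exact hc.isComplete
  refine ⟨hq.Corner, nr, na, hcs, (φ : hq.Corner →ₗ[ℂ] A), hφ, fun x y => rfl, rfl, ?_⟩
  intro a h1 h2
  have : a ∈ Set.range φ := by rw [hrange]; exact ⟨h1, h2⟩
  exact this

section
variable {A : Type*} [Ring A] [Algebra ℂ A]

/-- Compression by a commuting idempotent does not enlarge the nonzero spectrum. -/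
theorem compress_spec {f v : A} (hf : f * f = f) (hc : f * v = v * f) {z : ℂ} (hz : z ≠ 0)
    (h : z ∉ spectrum ℂ v) : z ∉ spectrum ℂ (f * v) := by
  rw [spectrum.notMem_iff] at h ⊢
  obtain ⟨u, hu⟩ := h
  have hcu : f * (u : A) = u * f := by
    rw [hu, mul_sub, sub_mul, hc, Algebra.commutes]
  have hcu' : f * (↑u⁻¹ : A) = ↑u⁻¹ * f := by
    have := (show Commute f (u : A) from hcu).units_inv_right
    exact this
  have e : algebraMap ℂ A z - f * v = f * u + z • (1 - f) := by
    rw [hu, mul_sub, Algebra.algebraMap_eq_smul_one, smul_sub, mul_smul_comm, mul_one]; abel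
  rw [e]
  have g1 : f * (1 - f) = 0 := by rw [mul_sub, mul_one, hf, sub_self]
  have g2 : (1 - f) * f = 0 := by rw [sub_mul, one_mul, hf, sub_self]
  have g3 : (1 - f) * (1 - f) = 1 - f := by rw [mul_sub, g2, mul_one, sub_zero]
  have k1 : f * (u : A) * (f * ↑u⁻¹) = f := by
    rw [hcu, mul_assoc, ← mul_assoc f f, hf, hcu', ← mul_assoc, Units.mul_inv, one_mul]
  have k2 : f * (↑u⁻¹ : A) * (f * u) = f := by
    rw [hcu', mul_assoc, ← mul_assoc f f, hf, hcu, ← mul_assoc, Units.inv_mul, one_mul]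
  have j1 : f * (u : A) * (1 - f) = 0 := by rw [hcu, mul_assoc, g1, mul_zero]
  have j2 : f * (↑u⁻¹ : A) * (1 - f) = 0 := by rw [hcu', mul_assoc, g1, mul_zero]
  have j3 : ∀ y : A, (1 - f) * (f * y) = 0 := fun y => by rw [← mul_assoc, g2, zero_mul]
  refine isUnit_iff_exists_and_exists.2 ⟨⟨f * ↑u⁻¹ + z⁻¹ • (1 - f), ?_⟩,
    ⟨f * ↑u⁻¹ + z⁻¹ • (1 - f), ?_⟩⟩
  · rw [mul_add, add_mul, add_mul, k1, mul_smul_comm, j1, smul_mul_assoc, j3, smul_mul_smul_comm, g3,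
      mul_inv_cancel₀ hz]
    simp
  · rw [mul_add, add_mul, add_mul, k2, mul_smul_comm, j2, smul_mul_assoc, j3, smul_mul_smul_comm, g3,
      inv_mul_cancel₀ hz]
    simp

theorem corner_spec {B : Type*} [Ring B] [Algebra ℂ B] {q : A} (φ : B →ₗ[ℂ] A)
    (hφ : Function.Injective φ) (hmul : ∀ x y, φ (x * y) = φ x * φ y) (h1 : φ 1 = q)
    (hsurj : ∀ a, q * a = a → a * q = a → ∃ b, φ b = a) (b : B) {z : ℂ} (hz : z ≠ 0) :
    z ∈ spectrum ℂ b ↔ z ∈ spectrum ℂ (φ b) := by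
  have hqq : q * q = q := by rw [← h1, ← hmul, one_mul]
  have hl : ∀ b, q * φ b = φ b := fun b => by rw [← h1, ← hmul, one_mul]
  have hr : ∀ b, φ b * q = φ b := fun b => by rw [← h1, ← hmul, mul_one]
  rw [← not_iff_not, spectrum.notMem_iff, spectrum.notMem_iff]
  have e1 : φ (algebraMap ℂ B z - b) = z • q - φ b := by
    rw [map_sub, Algebra.algebraMap_eq_smul_one, map_smul, h1]
  have g1 : q * (1 - q) = 0 := by rw [mul_sub, mul_one, hqq, sub_self]
  have g2 : (1 - q) * q = 0 := by rw [sub_mul, one_mul, hqq, sub_self]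
  have g3 : (1 - q) * (1 - q) = 1 - q := by rw [mul_sub, g2, mul_one, sub_zero]
  constructor
  · rintro ⟨u, hu⟩
    have e : algebraMap ℂ A z - φ b = φ u + z • (1 - q) := by
      rw [hu, e1, Algebra.algebraMap_eq_smul_one, smul_sub]; abel
    rw [e]
    have j1 : ∀ b, φ b * (1 - q) = 0 := fun b => by rw [mul_sub, mul_one, hr, sub_self]
    have j2 : ∀ b, (1 - q) * φ b = 0 := fun b => by rw [sub_mul, one_mul, hl, sub_self]
    refine isUnit_iff_exists_and_exists.2 ⟨⟨φ ↑u⁻¹ + z⁻¹ • (1 - q), ?_⟩,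
      ⟨φ ↑u⁻¹ + z⁻¹ • (1 - q), ?_⟩⟩
    · rw [mul_add, add_mul, add_mul, ← hmul, Units.mul_inv, mul_smul_comm, j1, smul_mul_assoc, j2,
        smul_mul_smul_comm, g3, mul_inv_cancel₀ hz, h1]
      simp
    · rw [mul_add, add_mul, add_mul, ← hmul, Units.inv_mul, mul_smul_comm, j1, smul_mul_assoc, j2,
        smul_mul_smul_comm, g3, inv_mul_cancel₀ hz, h1]
      simp
  · rintro ⟨u, hu⟩
    have hcu : q * (u : A) = u * q := by
      rw [hu, mul_sub, sub_mul, hl, hr, Algebra.commutes]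
    have hcu' : q * (↑u⁻¹ : A) = ↑u⁻¹ * q := by
      have := (show Commute q (u : A) from hcu).units_inv_right
      exact this
    obtain ⟨w, hw⟩ := hsurj (q * ↑u⁻¹) (by rw [← mul_assoc, hqq]) (by
      rw [hcu', mul_assoc, hqq])
    have e2 : φ (algebraMap ℂ B z - b) = q * u := by
      rw [e1, hu, mul_sub, hl, Algebra.algebraMap_eq_smul_one, mul_smul_comm, mul_one]
    refine isUnit_iff_exists_and_exists.2 ⟨⟨w, hφ ?_⟩, ⟨w, hφ ?_⟩⟩
    · rw [hmul, e2, hw, h1, hcu, mul_assoc, ← mul_assoc q q, hqq, hcu', ← mul_assoc, Units.mul_inv,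
        one_mul]
    · rw [hmul, e2, hw, h1, hcu', mul_assoc, ← mul_assoc q q, hqq, hcu, ← mul_assoc, Units.inv_mul,
        one_mul]

end
section
variable {A : Type*} [Ring A] [Algebra ℂ A]

theorem encard_le_rank (x a : A) : (spectrum ℂ (x * a) \ {0}).encard ≤ spectralRank a :=
  le_iSup (fun x : A => (spectrum ℂ (x * a) \ {0}).encard) x

theorem rank_mul_left (x a : A) : spectralRank (x * a) ≤ spectralRank a := by
  refine iSup_le fun y => ?_
  rw [← mul_assoc]
  exact encard_le_rank _ _

theorem rank_mul_right (a x : A) : spectralRank (a * x) ≤ spectralRank a := by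
  refine iSup_le fun y => ?_
  rw [← mul_assoc, spectrum.nonzero_mul_comm, ← mul_assoc]
  exact encard_le_rank _ _

theorem finite_of_rank {a : A} (h : spectralRank a < ⊤) : (spectrum ℂ a).Finite := by
  have h1 := (encard_le_rank 1 a).trans_lt h
  rw [one_mul, Set.encard_lt_top_iff] at h1
  refine (h1.insert 0).subset ?_
  intro z hz
  by_cases h0 : z = 0
  · exact Or.inl h0
  · exact Or.inr ⟨hz, h0⟩

theorem rank_lt_rank {f q : A} (hf : f * f = f) (hq : q * q = q) (h1 : f * q = f) (h2 : q * f = f)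
    (hne : f ≠ q) (hr : spectralRank q < ⊤) : spectralRank f < spectralRank q := by
  have hrf : spectralRank f < ⊤ := by
    rw [← h1]; exact (rank_mul_left _ _).trans_lt hr
  obtain ⟨x, hx⟩ : ∃ x : A, (spectrum ℂ (x * f) \ {0}).encard = spectralRank f :=
    ENat.exists_eq_iSup_of_lt_top hrf
  have hfin : (spectrum ℂ (x * f) \ {0}).Finite := by
    rw [← Set.encard_lt_top_iff, hx]; exact hrf
  obtain ⟨c, hc⟩ := (hfin.insert 0).exists_notMem
  rw [Set.mem_insert_iff, not_or] at hc
  have hs : spectrum ℂ (x * f) \ {0} = spectrum ℂ (f * x * f) \ {0} := by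
    rw [← spectrum.nonzero_mul_comm f (f * x), ← mul_assoc, hf, spectrum.nonzero_mul_comm]
  set v : A := f * x * f + c • (q - f) with hv
  have fq : f * (q - f) = 0 := by rw [mul_sub, h1, hf, sub_self]
  have qf : (q - f) * f = 0 := by rw [sub_mul, h2, hf, sub_self]
  have qq : (q - f) * (q - f) = q - f := by rw [mul_sub, qf, sub_mul, hq, h1, sub_zero]
  have fv : f * v = f * x * f := by
    rw [hv, mul_add, mul_smul_comm, fq, smul_zero, add_zero, ← mul_assoc, ← mul_assoc, hf]
  have vf : v * f = f * x * f := by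
    rw [hv, add_mul, smul_mul_assoc, qf, smul_zero, add_zero, mul_assoc, hf]
  have vq : v * q = v := by
    rw [hv, add_mul, smul_mul_assoc, sub_mul, hq, h1, mul_assoc, h1]
  have hsub : insert c (spectrum ℂ (x * f) \ {0}) ⊆ spectrum ℂ (v * q) \ {0} := by
    rw [vq]
    rintro z (rfl | hz)
    · refine ⟨?_, hc.1⟩
      rw [spectrum.mem_iff]
      rintro ⟨u, hu⟩
      have e : (u : A) * (q - f) = 0 := by
        rw [hu, hv, sub_mul, add_mul, mul_assoc, fq, mul_zero, zero_add, smul_mul_assoc, qq,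
          Algebra.algebraMap_eq_smul_one, smul_mul_assoc, one_mul, sub_self]
      have e2 : q - f = 0 := by
        rw [← one_mul (q - f), ← Units.inv_mul u, mul_assoc, e, mul_zero]
      exact hne (sub_eq_zero.1 e2).symm
    · rw [hs, ← fv] at hz
      refine ⟨?_, hz.2⟩
      by_contra hcon
      exact compress_spec hf (fv.trans vf.symm) hz.2 hcon hz.1
  have h3 := (Set.encard_le_encard hsub).trans (encard_le_rank v q)
  rw [Set.encard_insert_of_notMem hc.2, hx] at h3
  exact (ENat.lt_add_one_iff hrf.ne).2 le_rfl |>.trans_le h3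

/-- Minimal idempotents (allowing zero). -/
def IsMinIdem (q : A) : Prop := q * q = q ∧ ∀ x, ∃ c : ℂ, q * x * q = c • q

end

section
variable {A : Type*} [NormedRing A] [NormedAlgebra ℂ A] [CompleteSpace A]

theorem exists_fr_idem (hss : SSimple A) (hcl : IsClosed {a : A | spectralRank a < ⊤})
    {r b : A} (hr : r * r = r) (h1 : r * b = b) (h2 : b * r = b) (hb : spectralRank b < ⊤)
    (hb0 : b ≠ 0) :
    ∃ f : A, f * f = f ∧ f ≠ 0 ∧ spectralRank f < ⊤ ∧ r * f = f ∧ f * r = f := by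
  have : ¬ ∀ x : A, ∀ z ∈ spectrum ℂ (x * b), z = 0 := fun h => hb0 (hss b h)
  push Not at this
  obtain ⟨x, z, hz, hz0⟩ := this
  set g : A := r * (x * b) with hg
  have hgr : g * r = g := by rw [hg, mul_assoc, mul_assoc, h2]
  have hrg : r * g = g := by rw [hg, ← mul_assoc, hr]
  have hzg : z ∈ spectrum ℂ g := by
    have : z ∈ spectrum ℂ (r * (x * b)) \ {0} := by
      rw [spectrum.nonzero_mul_comm, mul_assoc, h2]; exact ⟨hz, hz0⟩
    exact this.1
  have hgS : spectralRank g < ⊤ :=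
    ((rank_mul_left _ _).trans (rank_mul_left _ _)).trans_lt hb
  obtain ⟨ρ, h0, hR, hs⟩ := exists_radius ((fun t => ‖t‖) '' spectrum ℂ g)
    ((finite_of_rank hgS).image _) (norm_pos_iff.2 hz0)
  have hρ : (ρ : ℂ) ≠ 0 := by exact_mod_cast h0.ne'
  set a : A := (ρ : ℂ)⁻¹ • (g - algebraMap ℂ A 0) with ha
  obtain ⟨e, P, hP, ht, e1, e2⟩ := riesz a (by
    intro t ht ht1
    rw [mem_spectrum_scale hρ] at ht
    apply hs
    refine ⟨_, ht, ?_⟩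
    simp [ht1, abs_of_pos h0])
  have hP1 : P ≠ 1 := by
    apply riesz_ne_one ht e1 e2 (z := z / ρ)
    · rw [mem_spectrum_scale hρ, zero_add, mul_div_cancel₀ _ hρ]; exact hzg
    · rw [norm_div, Complex.norm_real, Real.norm_eq_abs, abs_of_pos h0]
      rwa [one_lt_div h0]
  have ha' : a = (ρ : ℂ)⁻¹ • g := by rw [ha, map_zero, sub_zero]
  have har : a * r = a := by rw [ha', smul_mul_assoc, hgr]
  have hra : r * a = a := by rw [ha', mul_smul_comm, hrg]
  have haS : spectralRank a < ⊤ := by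
    rw [ha', ← one_mul g, ← smul_mul_assoc]
    exact (rank_mul_left _ _).trans_lt hgS
  have d1 : ∀ k, 1 - e k = (-e k) * a ^ (2 ^ k - 1) * a := fun k => by
    rw [mul_assoc, ← pow_succ, Nat.sub_add_cancel Nat.one_le_two_pow, ← e1 k]; noncomm_ring
  have d2 : ∀ k, 1 - e k = a * (a ^ (2 ^ k - 1) * (-e k)) := fun k => by
    rw [← mul_assoc, ← pow_succ', Nat.sub_add_cancel Nat.one_le_two_pow, ← e2 k]; noncomm_ring
  have hlim : Tendsto (fun k => 1 - e k) atTop (𝓝 (1 - P)) := tendsto_const_nhds.sub ht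
  refine ⟨1 - P, ?_, ?_, ?_, ?_, ?_⟩
  · rw [mul_sub, sub_mul, sub_mul, hP]; simp
  · exact sub_ne_zero.2 hP1.symm
  · refine hcl.mem_of_tendsto hlim (Eventually.of_forall fun k => ?_)
    show spectralRank (1 - e k) < ⊤
    rw [d1]
    exact (rank_mul_left _ _).trans_lt haS
  · refine tendsto_nhds_unique (hlim.const_mul r) (hlim.congr fun k => ?_)
    rw [d2, ← mul_assoc r, hra]
  · refine tendsto_nhds_unique (hlim.mul_const r) (hlim.congr fun k => ?_)
    rw [d1, mul_assoc _ a r, har]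

theorem exists_min (hss : SSimple A) (hcl : IsClosed {a : A | spectralRank a < ⊤})
    {r b : A} (hr : r * r = r) (h1 : r * b = b) (h2 : b * r = b) (hb : spectralRank b < ⊤)
    (hb0 : b ≠ 0) :
    ∃ q : A, IsMinIdem q ∧ q ≠ 0 ∧ r * q = q ∧ q * r = q := by
  obtain ⟨q, ⟨hq, hq0, hqS, hrq, hqr⟩, hmin⟩ := exists_minimalFor_of_wellFoundedLT _ spectralRank
    (exists_fr_idem hss hcl hr h1 h2 hb hb0)
  refine ⟨q, ⟨hq, ?_⟩, hq0, hrq, hqr⟩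
  obtain ⟨B, i1, i2, i3, φ, hφ, hmul, hone, hsurj⟩ := exists_corner q hq
  have hl : ∀ b, q * φ b = φ b := fun b => by rw [← hone, ← hmul, one_mul]
  have hr : ∀ b, φ b * q = φ b := fun b => by rw [← hone, ← hmul, mul_one]
  have hB : SSimple B := by
    intro b hb
    apply hφ
    rw [map_zero]
    apply hss
    intro x z hz
    by_contra h0
    have hz2 : z ∈ spectrum ℂ (q * (x * φ b)) \ {0} := by
      rw [spectrum.nonzero_mul_comm, mul_assoc, hr]; exact ⟨hz, h0⟩
    obtain ⟨y, hy⟩ := hsurj (q * x * q) (by rw [← mul_assoc, ← mul_assoc, hq])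
      (by rw [mul_assoc, hq])
    have e : q * (x * φ b) = φ (y * b) := by
      rw [hmul, hy, mul_assoc, mul_assoc, hl]
    rw [e] at hz2
    exact h0 (hb y z ((corner_spec φ hφ hmul hone hsurj _ h0).2 hz2.1))
  have hBf : ∀ u : B, (spectrum ℂ u).Finite := by
    intro u
    have hu : spectralRank (φ u) < ⊤ := by
      rw [← hr]; exact (rank_mul_left _ _).trans_lt hqS
    refine ((finite_of_rank hu).insert 0).subset fun z hz => ?_
    by_cases h0 : z = 0
    · exact Or.inl h0
    · exact Or.inr ((corner_spec φ hφ hmul hone hsurj _ h0).1 hz)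
  have hBi : ∀ f : B, f * f = f → f = 0 ∨ f = 1 := by
    intro f hf
    by_contra hcon
    push Not at hcon
    have hff : φ f * φ f = φ f := by rw [← hmul, hf]
    have hlt := rank_lt_rank hff hq (hr f) (hl f)
      (fun h => hcon.2 (hφ (h.trans hone.symm))) hqS
    have := hmin (j := φ f) ⟨hff, fun h => hcon.1 (hφ (h.trans (map_zero φ).symm)), hlt.trans hqS,
      by rw [← hl f, ← mul_assoc, hrq], by rw [← hr f, mul_assoc, hqr]⟩ hlt.le
    exact absurd hlt (not_lt.2 this)
  intro x
  obtain ⟨y, hy⟩ := hsurj (q * x * q) (by rw [← mul_assoc, ← mul_assoc, hq])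
      (by rw [mul_assoc, hq])
  obtain ⟨c, hc⟩ := all_scalar hB hBf hBi y
  exact ⟨c, by rw [← hy, hc, map_smul, hone]⟩

end
section
variable {A : Type*} [Ring A] [Algebra ℂ A]

theorem spec_zero {z : ℂ} (h : z ∈ spectrum ℂ (0 : A)) : z = 0 := by
  by_contra h0
  rw [spectrum.mem_iff, sub_zero] at h
  exact h ((IsUnit.mk0 z h0).map (algebraMap ℂ A))

theorem min_dim_one (hss : SSimple A) {p q : A} (hp : IsMinIdem p) (hq : IsMinIdem q) :
    ∃ u : A, ∀ x, ∃ c : ℂ, p * x * q = c • u := by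
  by_cases h : ∀ x, p * x * q = 0
  · exact ⟨0, fun x => ⟨0, by simp [h x]⟩⟩
  push Not at h
  obtain ⟨x, hx⟩ := h
  refine ⟨p * x * q, fun x' => ?_⟩
  have : ¬ ∀ y : A, ∀ z ∈ spectrum ℂ (y * (p * x * q)), z = 0 := fun h => hx (hss _ h)
  push Not at this
  obtain ⟨y, z, hz, hz0⟩ := this
  have hz2 : z ∈ spectrum ℂ (q * (y * (p * x * q))) \ {0} := by
    rw [spectrum.nonzero_mul_comm]
    refine ⟨?_, hz0⟩
    have e : y * (p * x * q) * q = y * (p * x * q) := by simp only [mul_assoc, hq.1]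
    rwa [e]
  obtain ⟨c, hc⟩ := hq.2 (y * (p * x))
  have e : q * (y * (p * x * q)) = q * (y * (p * x)) * q := by simp only [mul_assoc]
  rw [e, hc] at hz2
  have hc0 : c ≠ 0 := by
    rintro rfl
    rw [zero_smul] at hz2
    exact hz0 (spec_zero hz2.1)
  obtain ⟨d, hd⟩ := hp.2 (x' * q * y)
  refine ⟨c⁻¹ * d, ?_⟩
  have e1 : q = c⁻¹ • (q * (y * (p * x)) * q) := by rw [hc, smul_smul, inv_mul_cancel₀ hc0, one_smul]
  calc p * x' * q = p * x' * (c⁻¹ • (q * (y * (p * x)) * q)) := by rw [← e1]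
    _ = c⁻¹ • (p * (x' * q * y) * p * (x * q)) := by rw [mul_smul_comm]; simp only [mul_assoc]
    _ = (c⁻¹ * d) • (p * x * q) := by rw [hd, smul_mul_assoc, smul_smul, mul_assoc]

/-- A sum of `m` elements of the form `x q y` with `q` a minimal idempotent. -/
def InSoc (m : ℕ) (a : A) : Prop :=
  ∃ (ι : Type) (_ : Fintype ι) (x q y : ι → A), Fintype.card ι = m ∧ (∀ i, IsMinIdem (q i)) ∧
    a = ∑ i, x i * q i * y i

theorem InSoc.add {m n : ℕ} {a b : A} (ha : InSoc m a) (hb : InSoc n b) : InSoc (m + n) (a + b) := by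
  obtain ⟨ι, _, x, q, y, hc, hq, rfl⟩ := ha
  obtain ⟨κ, _, x', q', y', hc', hq', rfl⟩ := hb
  refine ⟨ι ⊕ κ, inferInstance, Sum.elim x x', Sum.elim q q', Sum.elim y y', ?_, ?_, ?_⟩
  · rw [Fintype.card_sum, hc, hc']
  · rintro (i | i)
    · exact hq i
    · exact hq' i
  · simp [Fintype.sum_sum_type]

theorem InSoc.mul_left {m : ℕ} {a : A} (z : A) (ha : InSoc m a) : InSoc m (z * a) := by
  obtain ⟨ι, _, x, q, y, hc, hq, rfl⟩ := ha
  exact ⟨ι, inferInstance, fun i => z * x i, q, y, hc, hq, by simp [Finset.mul_sum, mul_assoc]⟩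

theorem InSoc.mul_right {m : ℕ} {a : A} (z : A) (ha : InSoc m a) : InSoc m (a * z) := by
  obtain ⟨ι, _, x, q, y, hc, hq, rfl⟩ := ha
  exact ⟨ι, inferInstance, x, q, fun i => y i * z, hc, hq, by simp [Finset.sum_mul, mul_assoc]⟩

theorem InSoc.zero : InSoc 0 (0 : A) :=
  ⟨Empty, inferInstance, Empty.elim, Empty.elim, Empty.elim, by simp, by simp, by simp⟩

theorem InSoc.single {q : A} (hq : IsMinIdem q) : InSoc 1 q :=
  ⟨Unit, inferInstance, fun _ => 1, fun _ => q, fun _ => 1, by simp, fun _ => hq, by simp⟩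

open Polynomial in
theorem spec_bound {κ : Type} [Fintype κ] (w : κ → A) (b : A)
    (h : ∀ k : ℕ, b ^ (k + 2) ∈ Submodule.span ℂ (Set.range w)) :
    (spectrum ℂ b).encard ≤ (Fintype.card κ + 2 : ℕ) := by
  set d := Fintype.card κ with hd
  have hdep : ¬ LinearIndependent ℂ
      (fun i : Fin (d + 1) => (⟨b ^ ((i : ℕ) + 2), h i⟩ : Submodule.span ℂ (Set.range w))) := by
    intro hl
    have : FiniteDimensional ℂ (Submodule.span ℂ (Set.range w)) :=
      FiniteDimensional.span_of_finite ℂ (Set.finite_range w)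
    have h1 := hl.fintype_card_le_finrank
    have h2 := finrank_range_le_card (R := ℂ) w
    rw [Fintype.card_fin] at h1
    have h3 : Module.finrank ℂ (Submodule.span ℂ (Set.range w)) ≤ d := h2
    omega
  rw [Fintype.not_linearIndependent_iff] at hdep
  obtain ⟨g, hg, i0, hi0⟩ := hdep
  have hg' : ∑ i : Fin (d + 1), g i • b ^ ((i : ℕ) + 2) = 0 := by
    have := congrArg (Submodule.subtype _) hg
    simpa using this
  set P : ℂ[X] := ∑ i : Fin (d + 1), C (g i) * X ^ ((i : ℕ) + 2) with hP
  have hPb : aeval b P = 0 := by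
    rw [hP, map_sum, ← hg']
    refine Finset.sum_congr rfl fun i _ => ?_
    rw [map_mul, aeval_C, map_pow, aeval_X, Algebra.smul_def]
  have hP0 : P ≠ 0 := by
    intro h0
    have : P.coeff ((i0 : ℕ) + 2) = g i0 := by
      rw [hP, finsetSum_coeff, Finset.sum_eq_single i0]
      · simp
      · intro j _ hj
        rw [coeff_C_mul_X_pow, if_neg]
        intro h; apply hj; ext; omega
      · simp
    rw [h0, coeff_zero] at this
    exact hi0 this.symm
  have hdeg : P.natDegree ≤ d + 2 := by
    rw [hP]
    refine natDegree_sum_le_of_forall_le _ _ fun i _ => ?_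
    refine (natDegree_C_mul_X_pow_le _ _).trans ?_
    have := i.2
    omega
  have hsub : spectrum ℂ b ⊆ (P.roots.toFinset : Set ℂ) := by
    intro z hz
    have := spectrum.subset_polynomial_aeval b P ⟨z, hz, rfl⟩
    rw [hPb] at this
    simp only [Finset.mem_coe, Multiset.mem_toFinset, mem_roots hP0, IsRoot.def]
    exact spec_zero this
  refine (Set.encard_le_encard hsub).trans ?_
  rw [Set.encard_coe_eq_coe_finsetCard]
  exact_mod_cast (Multiset.toFinset_card_le _).trans ((card_roots' P).trans hdeg)

theorem InSoc.rank_le (hss : SSimple A) {m : ℕ} {a : A} (ha : InSoc m a) :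
    spectralRank a ≤ (m * m + 2 : ℕ) := by
  refine iSup_le fun z => ?_
  refine (Set.encard_le_encard Set.sdiff_subset).trans ?_
  obtain ⟨ι, _, x, q, y, hc, hq, hb⟩ := ha.mul_left z
  set b := z * a
  choose u hu using fun (i j : ι) => min_dim_one hss (hq i) (hq j)
  have := spec_bound (fun k : ι × ι => x k.1 * u k.1 k.2 * y k.2) b ?_
  · rwa [Fintype.card_prod, hc] at this
  intro k
  have e : b ^ (k + 2) = b * b ^ k * b := by rw [← pow_succ', ← pow_succ]
  rw [e]
  generalize b ^ k = w
  rw [hb, Finset.sum_mul, Finset.sum_mul]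
  refine Submodule.sum_mem _ fun i _ => ?_
  rw [Finset.mul_sum]
  refine Submodule.sum_mem _ fun j _ => ?_
  obtain ⟨c, hc⟩ := hu i j (y i * w * x j)
  have e2 : x i * q i * y i * w * (x j * q j * y j)
      = x i * (q i * (y i * w * x j) * q j) * y j := by simp only [mul_assoc]
  rw [e2, hc, mul_smul_comm, smul_mul_assoc]
  exact Submodule.smul_mem _ _ (Submodule.subset_span ⟨(i, j), rfl⟩)

end

theorem chain_contra {A : Type*} [NormedRing A] [NormedAlgebra ℂ A] [CompleteSpace A]
    (hss : SSimple A) (hcl : IsClosed {a : A | spectralRank a < ⊤})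
    (p : ℕ → A) (hs : ∀ k, ∃ m, InSoc m (p k)) (hid : ∀ k, p k * p k = p k)
    (h1 : ∀ k, p k * p (k + 1) = p k) (h2 : ∀ k, p (k + 1) * p k = p k)
    (hne : ∀ k, p (k + 1) ≠ p k) : False := by
  have hle : ∀ i j, i ≤ j → p i * p j = p i ∧ p j * p i = p i := by
    intro i j hij
    induction j, hij using Nat.le_induction with
    | base => exact ⟨hid i, hid i⟩
    | succ j hij ih =>
      constructor
      · rw [← ih.1, mul_assoc, h1]
      · rw [← ih.2, ← mul_assoc, h2]
  set d : ℕ → A := fun k => p (k + 1) - p k with hd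
  have hd0 : ∀ k, d k ≠ 0 := fun k => sub_ne_zero.2 (hne k)
  have hdd : ∀ k, d k * d k = d k := fun k => by
    simp only [hd, mul_sub, sub_mul, hid, h1, h2]; abel
  have hdo : ∀ i j, i ≠ j → d i * d j = 0 := by
    intro i j hij
    rcases lt_or_gt_of_ne hij with h | h
    · have a1 := (hle (i + 1) j h).1
      have a2 := (hle (i + 1) (j + 1) (by omega)).1
      have a3 := (hle i j (by omega)).1
      have a4 := (hle i (j + 1) (by omega)).1
      simp only [hd, mul_sub, sub_mul, a1, a2, a3, a4]; abel
    · have a1 := (hle (j + 1) i h).2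
      have a2 := (hle (j + 1) (i + 1) (by omega)).2
      have a3 := (hle j i (by omega)).2
      have a4 := (hle j (i + 1) (by omega)).2
      simp only [hd, mul_sub, sub_mul, a1, a2, a3, a4]; abel
  have hdpos : ∀ k, 0 < ‖d k‖ := fun k => norm_pos_iff.2 (hd0 k)
  set c : ℕ → ℝ := fun k => (1 / 2) ^ k / (1 + ‖d k‖) with hc
  have hcpos : ∀ k, 0 < c k := fun k => by simp only [hc]; positivity
  have hcle : ∀ k, c k ≤ (1 / 2) ^ k := fun k =>
    div_le_self (by positivity) (by linarith [hdpos k])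
  have hbd : ∀ k, ‖(c k : ℂ) • d k‖ ≤ (1 / 2) ^ k := by
    intro k
    rw [norm_smul, Complex.norm_real, Real.norm_eq_abs, abs_of_pos (hcpos k)]
    simp only [hc]
    rw [div_mul_eq_mul_div, div_le_iff₀ (by linarith [hdpos k])]
    have : (0 : ℝ) < (1 / 2) ^ k := by positivity
    nlinarith [hdpos k]
  have hsum : Summable (fun k => (c k : ℂ) • d k) :=
    Summable.of_norm_bounded summable_geometric_two hbd
  obtain ⟨s, hsS⟩ := hsum
  have hfr : ∀ k, ∃ m, InSoc m (∑ i ∈ Finset.range k, (c i : ℂ) • d i) := by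
    intro k
    induction k with
    | zero => exact ⟨0, by simpa using InSoc.zero⟩
    | succ k ih =>
      obtain ⟨m, hm⟩ := ih
      obtain ⟨m1, hm1⟩ := hs (k + 1)
      obtain ⟨m2, hm2⟩ := hs k
      refine ⟨m + (m1 + m2), ?_⟩
      rw [Finset.sum_range_succ]
      refine hm.add ?_
      have := ((hm1.mul_left ((c k : ℂ) • 1)).add (hm2.mul_left (-((c k : ℂ) • 1))))
      convert this using 1
      simp only [hd, smul_sub, neg_mul, smul_mul_assoc, one_mul]; abel
  have hsr : spectralRank s < ⊤ := by
    refine hcl.mem_of_tendsto hsS.tendsto_sum_nat (Eventually.of_forall fun k => ?_)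
    obtain ⟨m, hm⟩ := hfr k
    exact (hm.rank_le hss).trans_lt (ENat.natCast_lt_top _)
  have hfin := finite_of_rank hsr
  have hmem : ∀ k, (c k : ℂ) ∈ spectrum ℂ s := by
    intro k
    have hsd : s * d k = (c k : ℂ) • d k := by
      have t1 := hsS.mul_right (d k)
      refine t1.unique ?_
      have t2 := hasSum_single (f := fun i => (c i : ℂ) • d i * d k) k (fun j hj => by
        rw [smul_mul_assoc, hdo j k hj, smul_zero])
      simpa only [smul_mul_assoc, hdd] using t2
    rw [spectrum.mem_iff]
    rintro ⟨u, hu⟩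
    have e : (u : A) * d k = 0 := by
      rw [hu, sub_mul, hsd, Algebra.algebraMap_eq_smul_one, smul_mul_assoc, one_mul, sub_self]
    apply hd0 k
    rw [← one_mul (d k), ← Units.inv_mul u, mul_assoc, e, mul_zero]
  have hc0 : Tendsto c atTop (𝓝 0) :=
    squeeze_zero (fun k => (hcpos k).le) hcle
      (tendsto_pow_atTop_nhds_zero_of_lt_one (by norm_num) (by norm_num))
  have hfr2 : (Set.range c).Finite := by
    refine (hfin.image Complex.re).subset ?_
    rintro _ ⟨k, rfl⟩
    exact ⟨_, hmem k, by simp⟩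
  have : (0 : ℝ) ∈ Set.range c :=
    hfr2.isClosed.mem_of_tendsto hc0 (Eventually.of_forall fun k => ⟨k, rfl⟩)
  obtain ⟨k, hk⟩ := this
  exact (hcpos k).ne' hk

theorem stmt0 {A : Type*} [NormedRing A] [NormedAlgebra ℂ A] [CompleteSpace A]
    (hss : ∀ a : A, (∀ x : A, spectralRadius ℂ (x * a) = 0) → a = 0)
    (S : Set A) (hS : S = {a : A | spectralRank a < ⊤})
    (hclosed : IsClosed S) :
    ∃ n : ℕ, ∀ a ∈ S, spectralRank a ≤ (n : ℕ∞) := by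
  subst hS
  have hs : SSimple A := by
    intro a ha
    apply hss
    intro x
    rw [spectralRadius]
    simp only [ENNReal.iSup_eq_zero]
    intro z hz
    simp [ha x z hz]
  by_contra hcon
  push Not at hcon
  have step : ∀ p : {p : A // p * p = p ∧ ∃ m, InSoc m p}, ∃ p' : {p : A // p * p = p ∧ ∃ m, InSoc m p},
      p.1 * p'.1 = p.1 ∧ p'.1 * p.1 = p.1 ∧ p'.1 ≠ p.1 := by
    rintro ⟨p, hp, m, hm⟩
    obtain ⟨a, haS, ha⟩ := hcon ((m + m) * (m + m) + 2)
    set r := 1 - p with hr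
    have hrr : r * r = r := by rw [hr, mul_sub, sub_mul, sub_mul, hp]; simp
    have hb0 : r * a * r ≠ 0 := by
      intro h0
      have e : a = p * a + r * a * p := by
        have : a = p * a + r * a * p + r * a * r := by rw [hr]; noncomm_ring
        rw [h0, add_zero] at this
        exact this
      have h2 := ((hm.mul_right a).add (hm.mul_left (r * a))).rank_le hs
      rw [← e] at h2
      exact absurd ha (not_lt.2 h2)
    have hbS : spectralRank (r * a * r) < ⊤ :=
      ((rank_mul_right _ _).trans (rank_mul_left _ _)).trans_lt haS
    obtain ⟨q, hq, hq0, h1, h2⟩ := exists_min hs hclosed hrr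
      (b := r * a * r) (by rw [← mul_assoc, ← mul_assoc, hrr]) (by rw [mul_assoc, hrr]) hbS hb0
    have pq : p * q = 0 := by
      rw [hr, sub_mul, one_mul] at h1; simpa using h1
    have qp : q * p = 0 := by
      rw [hr, mul_sub, mul_one] at h2; simpa using h2
    refine ⟨⟨p + q, ?_, m + 1, hm.add (InSoc.single hq)⟩, ?_, ?_, ?_⟩
    · rw [mul_add, add_mul, add_mul, hp, pq, qp, hq.1]; simp
    · simp [mul_add, hp, pq]
    · simp [add_mul, hp, qp]
    · simpa using hq0
  choose nx hnx using step
  let f : ℕ → {p : A // p * p = p ∧ ∃ m, InSoc m p} :=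
    fun k => nx^[k] ⟨0, by simp, 0, InSoc.zero⟩
  have hf : ∀ k, f (k + 1) = nx (f k) := fun k => Function.iterate_succ_apply' _ _ _
  refine chain_contra hs hclosed (fun k => (f k).1) (fun k => (f k).2.2) (fun k => (f k).2.1)
    ?_ ?_ ?_
  · intro k; simp only [hf]; exact (hnx _).1
  · intro k; simp only [hf]; exact (hnx _).2.1
  · intro k; simp only [hf]; exact (hnx _).2.2
end

section
/- Let A be a semisimple unital complex Banach algebra and let S denote the set of finite-rank elements of A. If there exists a nonnegative integer n such that rank(a) ≤ n for every a ∈ S, then the ℂ-linear span of S is a finite-dimensional subspace of A. -/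
open scoped ENNReal

theorem aux_schur {A : Type*} [NormedRing A] [NormedAlgebra ℂ A] [CompleteSpace A]
    (m : Ideal A) [hm : m.IsMaximal] (f : (A ⧸ m) →ₗ[A] (A ⧸ m)) :
    ∃ c : ℂ, ∀ x, f x = c • x := by
  have : IsClosed (m : Set A) := Ideal.IsMaximal.isClosed
  have : IsSimpleModule A (A ⧸ m) := isSimpleModule_iff_isCoatom.mpr hm.1
  have : Nontrivial (A ⧸ m) := IsSimpleModule.nontrivial A _
  obtain ⟨d, hd⟩ := Submodule.Quotient.mk_surjective m (f (Submodule.Quotient.mk 1))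
  have hf : ∀ x : A, f (Submodule.Quotient.mk x) = Submodule.Quotient.mk (x * d) := by
    intro x
    have : (Submodule.Quotient.mk x : A ⧸ m) = x • Submodule.Quotient.mk 1 := by
      rw [← Submodule.Quotient.mk_smul, smul_eq_mul, mul_one]
    rw [this, map_smul, ← hd, ← Submodule.Quotient.mk_smul, smul_eq_mul]
  have hcont : Continuous f := by
    have hq : Topology.IsQuotientMap (Submodule.Quotient.mk : A → A ⧸ m) := isQuotientMap_quotient_mk'
    rw [hq.continuous_iff]
    have : (f ∘ (Submodule.Quotient.mk : A → A ⧸ m)) = fun x => Submodule.Quotient.mk (x * d) :=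
      funext hf
    rw [this]
    exact hq.continuous.comp (by fun_prop)
  let F : (A ⧸ m) →L[ℂ] (A ⧸ m) := ⟨f.restrictScalars ℂ, hcont⟩
  obtain ⟨c, hc⟩ := spectrum.nonempty F
  refine ⟨c, ?_⟩
  let g : (A ⧸ m) →ₗ[A] (A ⧸ m) :=
    { toFun := fun x => c • x - f x
      map_add' := fun x y => by simp only [smul_add, map_add]; abel
      map_smul' := fun a x => by
        simp only [map_smul, RingHom.id_apply, smul_sub]
        rw [smul_comm] }
  rcases g.bijective_or_eq_zero with hb | h0
  · exfalso
    apply hc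
    have : ⇑(algebraMap ℂ ((A ⧸ m) →L[ℂ] (A ⧸ m)) c - F) = g := by
      ext x; rfl
    rw [spectrum.mem_resolventSet_iff, ContinuousLinearMap.isUnit_iff_bijective, this]
    exact hb
  · intro x
    have : g x = 0 := by rw [h0]; rfl
    exact (sub_eq_zero.mp this).symm

theorem aux_finite {V : Type*} [AddCommGroup V] [Module ℂ V] (H : Set V) (N : ℕ)
    (h : ∀ v : Fin N → V, (∀ i, v i ∈ H) → ¬ LinearIndependent ℂ v) :
    FiniteDimensional ℂ (Submodule.span ℂ H) := by
  obtain ⟨b, hbH, hspan, hli⟩ := exists_linearIndependent ℂ H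
  rw [← hspan]
  have hfin : b.Finite := by
    by_contra hinf
    have hinf : b.Infinite := hinf
    have := hinf.to_subtype
    let e : Fin N ↪ b := Fin.valEmbedding.trans (Infinite.natEmbedding b)
    exact h (fun i => (e i : V)) (fun i => hbH (e i).2) (hli.comp e e.injective)
  exact FiniteDimensional.span_of_finite ℂ hfin

theorem aux_dense {A : Type*} [Ring A] [Algebra ℂ A] {ι : Type*}
    (X : ι → Type*) [∀ i, AddCommGroup (X i)] [∀ i, Module ℂ (X i)] [∀ i, Module A (X i)]
    [∀ i, IsScalarTower ℂ A (X i)] [∀ i, IsSimpleModule A (X i)] [DecidableEq ι]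
    (hne : ∀ i j, i ≠ j → ∀ f : X i →ₗ[A] X j, f = 0)
    (hsc : ∀ i, ∀ f : X i →ₗ[A] X i, ∃ c : ℂ, ∀ x, f x = c • x)
    {N : ℕ} (k : Fin N → ι) (v w : ∀ j, X (k j))
    (hli : LinearIndependent ℂ (fun j => (DFinsupp.single (k j) (v j) : Π₀ i, X i))) :
    ∃ r : A, ∀ j, r • v j = w j := by
  classical
  obtain ⟨L, hL⟩ : ∃ L : (Π₀ i, X i) →ₗ[ℂ] (Π₀ i, X i),
      ∀ j, L (DFinsupp.single (k j) (v j)) = DFinsupp.single (k j) (w j) := by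
    let b := Module.Basis.sumExtend hli
    refine ⟨b.constr ℂ (Sum.elim (fun j => DFinsupp.single (k j) (w j)) 0), fun j => ?_⟩
    have : (DFinsupp.single (k j) (v j) : Π₀ i, X i) = b (Sum.inl j) := by
      simp [b, Module.Basis.sumExtend]
      rfl
    rw [this, Module.Basis.constr_basis]; rfl
  let T : ∀ i, X i →+ X i := fun i =>
    ((DFinsupp.lapply i : (Π₀ i, X i) →ₗ[ℂ] X i) ∘ₗ L ∘ₗ DFinsupp.lsingle i).toAddMonoidHom
  have hT : ∀ i (c : ℂ) x, T i (c • x) = c • T i x := fun i c x =>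
    map_smul ((DFinsupp.lapply i : (Π₀ i, X i) →ₗ[ℂ] X i) ∘ₗ L ∘ₗ DFinsupp.lsingle i) c x
  have hTv : ∀ j, T (k j) (v j) = w j := fun j => by
    change (L (DFinsupp.single (k j) (v j))) (k j) = w j
    rw [hL]; simp
  have hdiag : ∀ E : Module.End A (Π₀ i, X i), ∀ i, ∃ c : ℂ, ∀ x : X i,
      E (DFinsupp.single i x) = DFinsupp.single i (c • x) := by
    intro E i
    obtain ⟨c, hc⟩ := hsc i (DFinsupp.lapply i ∘ₗ E ∘ₗ DFinsupp.lsingle i)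
    refine ⟨c, fun x => ?_⟩
    ext j
    by_cases hij : i = j
    · subst hij
      simpa using hc x
    · have := LinearMap.congr_fun (hne i j hij (DFinsupp.lapply j ∘ₗ E ∘ₗ DFinsupp.lsingle i)) x
      rw [DFinsupp.single_eq_of_ne (Ne.symm hij)]
      simpa using this
  let φ : (Π₀ i, X i) →+ (Π₀ i, X i) := DFinsupp.mapRange.addMonoidHom T
  have hφs : ∀ i x, φ (DFinsupp.single i x) = DFinsupp.single i (T i x) := fun i x => by
    simp [φ]
  have hφ : ∀ (E : Module.End A (Π₀ i, X i)) m, φ (E m) = E (φ m) := by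
    intro E m
    have : φ.comp E.toAddMonoidHom = E.toAddMonoidHom.comp φ := by
      apply DFinsupp.addHom_ext
      intro i x
      obtain ⟨c, hc⟩ := hdiag E i
      change φ (E _) = E (φ _)
      rw [hc, hφs, hφs, hc, hT]
    exact DFunLike.congr_fun this m
  let Φ : Module.End (Module.End A (Π₀ i, X i)) (Π₀ i, X i) :=
    { φ with map_smul' := fun E m => hφ E m }
  obtain ⟨r, hr⟩ := jacobson_density Φ
    (Finset.univ.image (fun j => (DFinsupp.single (k j) (v j) : Π₀ i, X i)))
  refine ⟨r, fun j => ?_⟩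
  have h1 := hr (DFinsupp.single (k j) (v j)) (Finset.mem_image_of_mem _ (Finset.mem_univ j))
  have h2 : φ (DFinsupp.single (k j) (v j)) = r • DFinsupp.single (k j) (v j) := h1
  rw [hφs, hTv] at h2
  have h3 := DFunLike.congr_fun h2 (k j)
  simpa using h3.symm

theorem aux_count {A : Type*} [Ring A] [Algebra ℂ A] {ι : Type*}
    (X : ι → Type*) [∀ i, AddCommGroup (X i)] [∀ i, Module ℂ (X i)] [∀ i, Module A (X i)]
    [∀ i, IsScalarTower ℂ A (X i)] (b : A)
    {N : ℕ} (k : Fin N → ι) (x : ∀ j, X (k j)) (hx : ∀ j, x j ≠ 0)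
    (h : ∀ j, b • x j = (((j : ℕ) : ℂ) + 1) • x j) :
    (N : ℕ∞) ≤ (spectrum ℂ b \ {0}).encard := by
  let g : Fin N → ℂ := fun j => ((j : ℕ) : ℂ) + 1
  have hg : Function.Injective g := by
    intro i j hij
    have : ((i : ℕ) : ℂ) = ((j : ℕ) : ℂ) := add_right_cancel hij
    exact Fin.ext (by exact_mod_cast this)
  have hsub : Set.range g ⊆ spectrum ℂ b \ {0} := by
    rintro _ ⟨j, rfl⟩
    refine ⟨fun hu => ?_, ?_⟩
    · obtain ⟨c, hc⟩ := hu.exists_left_inv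
      apply hx j
      have h1 : (algebraMap ℂ A (g j) - b) • x j = 0 := by
        rw [sub_smul, algebraMap_smul, h, sub_self]
      rw [← one_smul A (x j), ← hc, mul_smul, h1, smul_zero]
    · simp only [g, Set.mem_singleton_iff]
      exact_mod_cast Nat.succ_ne_zero (j : ℕ)
  refine le_trans ?_ (Set.encard_le_encard hsub)
  rw [← Set.image_univ, hg.encard_image]
  simp

theorem aux_eig {A : Type*} [Ring A] [Algebra ℂ A] {ι : Type*}
    (X : ι → Type*) [∀ i, AddCommGroup (X i)] [∀ i, Module ℂ (X i)] [∀ i, Module A (X i)]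
    [∀ i, IsScalarTower ℂ A (X i)]
    (hex : ∀ m : Ideal A, m.IsMaximal → ∃ i, Nonempty ((A ⧸ m) ≃ₗ[A] X i))
    (c : A) (l : ℂ) (h : ∀ b : A, b * (algebraMap ℂ A l - c) ≠ 1) :
    ∃ i, ∃ x : X i, x ≠ 0 ∧ c • x = l • x := by
  have hI : Ideal.span {algebraMap ℂ A l - c} ≠ ⊤ := by
    intro ht
    have h1 : (1 : A) ∈ Ideal.span {algebraMap ℂ A l - c} := by rw [ht]; trivial
    obtain ⟨b, hb⟩ := Ideal.mem_span_singleton'.mp h1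
    exact h b hb
  obtain ⟨m, hm, hle⟩ := Ideal.exists_le_maximal _ hI
  obtain ⟨i, ⟨e⟩⟩ := hex m hm
  refine ⟨i, e (Submodule.Quotient.mk 1), ?_, ?_⟩
  · rw [Ne, LinearEquiv.map_eq_zero_iff, Submodule.Quotient.mk_eq_zero]
    exact fun h1 => hm.ne_top (m.eq_top_iff_one.mpr h1)
  · have h0 : (algebraMap ℂ A l - c) • e (Submodule.Quotient.mk 1) = 0 := by
      rw [← map_smul, LinearEquiv.map_eq_zero_iff, ← Submodule.Quotient.mk_smul,
        Submodule.Quotient.mk_eq_zero, smul_eq_mul, mul_one]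
      exact hle (Ideal.subset_span rfl)
    rw [sub_smul, algebraMap_smul] at h0
    exact (sub_eq_zero.mp h0).symm

theorem aux_faithful {A : Type*} [NormedRing A] [NormedAlgebra ℂ A]
    (hss : ∀ a : A, (∀ x : A, spectralRadius ℂ (x * a) = 0) → a = 0) {ι : Type*}
    (X : ι → Type*) [∀ i, AddCommGroup (X i)] [∀ i, Module ℂ (X i)] [∀ i, Module A (X i)]
    [∀ i, IsScalarTower ℂ A (X i)]
    (hex : ∀ m : Ideal A, m.IsMaximal → ∃ i, Nonempty ((A ⧸ m) ≃ₗ[A] X i))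
    (a : A) (ha : ∀ i, ∀ x : X i, a • x = 0) : a = 0 := by
  apply hss
  have hleft : ∀ (y : A) (l : ℂ), l ≠ 0 → ∃ b : A, b * (algebraMap ℂ A l - y * a) = 1 := by
    intro y l hl
    by_contra! hcon
    obtain ⟨i, x, hx, hxe⟩ := aux_eig X hex _ l hcon
    rw [mul_smul, ha, smul_zero] at hxe
    exact (smul_ne_zero hl hx) hxe.symm
  intro y
  have hspec : ∀ l ∈ spectrum ℂ (y * a), l = 0 := by
    intro l hl
    by_contra hl0
    apply hl
    obtain ⟨b, hb⟩ := hleft y l hl0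
    have hb2 : algebraMap ℂ A l * b = 1 - (-b * y) * a := by
      rw [mul_sub, ← Algebra.commutes] at hb
      rw [← hb]
      noncomm_ring
    obtain ⟨d, hd⟩ := hleft (-b * y) 1 one_ne_zero
    rw [map_one, ← hb2, ← mul_assoc] at hd
    have hu : (algebraMap ℂ A l - y * a) = d * algebraMap ℂ A l :=
      (left_inv_eq_right_inv hd hb).symm
    refine isUnit_iff_exists.mpr ⟨b, ?_, hb⟩
    rw [hu, hd]
  unfold spectralRadius
  simp only [ENNReal.iSup_eq_zero]
  intro l hl
  rw [hspec l hl]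
  simp

theorem aux_spec {A : Type*} [NormedRing A] [NormedAlgebra ℂ A]
    (hss : ∀ a : A, (∀ x : A, spectralRadius ℂ (x * a) = 0) → a = 0) {ι : Type*} [DecidableEq ι]
    (X : ι → Type*) [∀ i, AddCommGroup (X i)] [∀ i, Module ℂ (X i)] [∀ i, Module A (X i)]
    [∀ i, IsScalarTower ℂ A (X i)]
    (hex : ∀ m : Ideal A, m.IsMaximal → ∃ i, Nonempty ((A ⧸ m) ≃ₗ[A] X i))
    (c : A) (hc : FiniteDimensional ℂ (LinearMap.range (Algebra.lsmul ℂ ℂ (Π₀ i, X i) c)))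
    (l : ℂ) (hl : l ≠ 0) (hlc : l ∈ spectrum ℂ c) :
    ∃ x : Π₀ i, X i, x ≠ 0 ∧ c • x = l • x := by
  suffices h : ∀ b : A, b * (algebraMap ℂ A l - c) ≠ 1 by
    obtain ⟨i, x, hx, hxe⟩ := aux_eig X hex c l h
    refine ⟨DFinsupp.single i x, by simpa using hx, ?_⟩
    rw [← DFinsupp.single_smul, ← DFinsupp.single_smul, hxe]
  intro b hb
  apply hlc
  refine isUnit_iff_exists.mpr ⟨b, ?_, hb⟩
  set C := Algebra.lsmul ℂ ℂ (Π₀ i, X i) c with hC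
  let f : (Π₀ i, X i) →ₗ[ℂ] (Π₀ i, X i) := l • LinearMap.id - C
  have hf : ∀ m, f m = (algebraMap ℂ A l - c) • m := fun m => by
    rw [sub_smul, algebraMap_smul]; rfl
  have hf' : ∀ m, f m = l • m - C m := fun m => rfl
  have hinj : Function.Injective f := by
    intro u v huv
    rw [hf, hf] at huv
    rw [← one_smul A u, ← one_smul A v, ← hb, mul_smul, mul_smul, huv]
  have hsurj : Function.Surjective f := by
    have hmaps : ∀ v ∈ LinearMap.range C, f v ∈ LinearMap.range C := by
      intro v hv
      rw [hf']
      exact Submodule.sub_mem _ (Submodule.smul_mem _ _ hv) ⟨v, rfl⟩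
    have hs : Function.Surjective (f.restrict hmaps) := by
      apply LinearMap.injective_iff_surjective.mp
      intro u v huv
      exact Subtype.ext (hinj (congrArg Subtype.val huv))
    intro m
    obtain ⟨v, hv⟩ := hs ⟨C m, m, rfl⟩
    have hv' : f v = C m := congrArg Subtype.val hv
    refine ⟨l⁻¹ • (m + v), ?_⟩
    rw [map_smul, map_add, hv', hf', sub_add_cancel, smul_smul, inv_mul_cancel₀ hl, one_smul]
  have hz : (algebraMap ℂ A l - c) * b - 1 = 0 := by
    apply aux_faithful hss X hex
    intro i x
    obtain ⟨u, hu⟩ := hsurj (DFinsupp.single i x)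
    have h1 : ((algebraMap ℂ A l - c) * b - 1) • (DFinsupp.single i x : Π₀ i, X i) = 0 := by
      rw [← hu, sub_smul, one_smul, mul_smul]
      nth_rewrite 1 [hf]
      rw [← mul_smul b, hb, one_smul, hf, sub_self]
    rw [← DFinsupp.single_smul] at h1
    exact DFinsupp.single_eq_zero.mp h1
  exact sub_eq_zero.mp hz

theorem aux_rank {A : Type*} [NormedRing A] [NormedAlgebra ℂ A]
    (hss : ∀ a : A, (∀ x : A, spectralRadius ℂ (x * a) = 0) → a = 0) {ι : Type*} [DecidableEq ι]
    (X : ι → Type*) [∀ i, AddCommGroup (X i)] [∀ i, Module ℂ (X i)] [∀ i, Module A (X i)]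
    [∀ i, IsScalarTower ℂ A (X i)]
    (hex : ∀ m : Ideal A, m.IsMaximal → ∃ i, Nonempty ((A ⧸ m) ≃ₗ[A] X i))
    (a : A) (ha : FiniteDimensional ℂ (LinearMap.range (Algebra.lsmul ℂ ℂ (Π₀ i, X i) a))) :
    spectralRank a < ⊤ := by
  have key : ∀ y : A, ((spectrum ℂ (y * a)) \ {0}).encard ≤
      (Module.finrank ℂ (LinearMap.range (Algebra.lsmul ℂ ℂ (Π₀ i, X i) a)) : ℕ∞) := by
    intro y
    have hfin : FiniteDimensional ℂ
        (LinearMap.range (Algebra.lsmul ℂ ℂ (Π₀ i, X i) (y * a))) := by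
      rw [map_mul, Module.End.mul_eq_comp, LinearMap.range_comp]
      infer_instance
    have hx : ∀ l : ((spectrum ℂ (y * a)) \ {0} : Set ℂ), ∃ x : Π₀ i, X i, x ≠ 0 ∧
        (y * a) • x = (l : ℂ) • x := fun l =>
      aux_spec hss X hex (y * a) hfin l l.2.2 l.2.1
    choose x hx0 hxe using hx
    have hli : LinearIndependent ℂ x :=
      Module.End.eigenvectors_linearIndependent (Algebra.lsmul ℂ ℂ (Π₀ i, X i) (y * a)) _ x
        (fun l => ⟨Module.End.mem_eigenspace_iff.mpr (hxe l), hx0 l⟩)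
    let w : ((spectrum ℂ (y * a)) \ {0} : Set ℂ) →
        LinearMap.range (Algebra.lsmul ℂ ℂ (Π₀ i, X i) a) := fun l => ⟨a • x l, x l, rfl⟩
    have hw : LinearIndependent ℂ w := by
      apply LinearIndependent.of_comp
        ((Algebra.lsmul ℂ ℂ (Π₀ i, X i) y) ∘ₗ Submodule.subtype _)
      have h2 := hli.units_smul (fun l => Units.mk0 (l : ℂ) l.2.2)
      convert h2 using 1
      funext l
      change y • (a • x l) = (l : ℂ) • x l
      rw [← mul_smul, hxe]
    have hF : Finite ((spectrum ℂ (y * a)) \ {0} : Set ℂ) := hw.finite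
    have := Fintype.ofFinite ((spectrum ℂ (y * a)) \ {0} : Set ℂ)
    have hle := hw.fintype_card_le_finrank
    rw [Set.encard, ENat.card_eq_coe_fintype_card]
    exact_mod_cast hle
  exact lt_of_le_of_lt (iSup_le key) (ENat.natCast_lt_top _)

theorem aux_range {A : Type*} [NormedRing A] [NormedAlgebra ℂ A] {ι : Type*} [DecidableEq ι]
    (X : ι → Type*) [∀ i, AddCommGroup (X i)] [∀ i, Module ℂ (X i)] [∀ i, Module A (X i)]
    [∀ i, IsScalarTower ℂ A (X i)] [∀ i, IsSimpleModule A (X i)]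
    (hne : ∀ i j, i ≠ j → ∀ f : X i →ₗ[A] X j, f = 0)
    (hsc : ∀ i, ∀ f : X i →ₗ[A] X i, ∃ c : ℂ, ∀ x, f x = c • x)
    (a : A) (n : ℕ) (ha : spectralRank a ≤ n) :
    FiniteDimensional ℂ (LinearMap.range (Algebra.lsmul ℂ ℂ (Π₀ i, X i) a)) := by
  let H : Set (Π₀ i, X i) := {m | ∃ i, ∃ x : X i, m = DFinsupp.single i (a • x)}
  have hH : FiniteDimensional ℂ (Submodule.span ℂ H) := by
    apply aux_finite H (n + 1)
    intro v hv hli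
    choose k x hx using hv
    have hv' : v = fun j => DFinsupp.single (k j) (a • x j) := funext hx
    rw [hv'] at hli
    obtain ⟨r, hr⟩ := aux_dense X hne hsc k (fun j => a • x j)
      (fun j => (((j : ℕ) : ℂ) + 1) • x j) hli
    have hx0 : ∀ j, x j ≠ 0 := by
      intro j h0
      apply hli.ne_zero j
      simp [h0]
    have h1 := aux_count X (r * a) k x hx0 (fun j => by rw [mul_smul]; exact hr j)
    have h2 : ((n + 1 : ℕ) : ℕ∞) ≤ n :=
      h1.trans ((le_iSup (fun y : A => ((spectrum ℂ (y * a)) \ {0}).encard) r).trans ha)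
    have h3 : n + 1 ≤ n := by exact_mod_cast h2
    omega
  refine Submodule.finiteDimensional_of_le (S₂ := Submodule.span ℂ H) ?_
  rintro _ ⟨m, rfl⟩
  induction m using DFinsupp.induction with
  | h0 => rw [map_zero]; exact Submodule.zero_mem _
  | ha i b f _ _ ih =>
    rw [map_add]
    refine Submodule.add_mem _ (Submodule.subset_span ⟨i, b, ?_⟩) ih
    rw [DFinsupp.single_smul]; rfl

theorem aux_main {A : Type*} [NormedRing A] [NormedAlgebra ℂ A]
    (hss : ∀ a : A, (∀ x : A, spectralRadius ℂ (x * a) = 0) → a = 0) {ι : Type*} [DecidableEq ι]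
    (X : ι → Type*) [∀ i, AddCommGroup (X i)] [∀ i, Module ℂ (X i)] [∀ i, Module A (X i)]
    [∀ i, IsScalarTower ℂ A (X i)] [∀ i, IsSimpleModule A (X i)]
    (hex : ∀ m : Ideal A, m.IsMaximal → ∃ i, Nonempty ((A ⧸ m) ≃ₗ[A] X i))
    (hne : ∀ i j, i ≠ j → ∀ f : X i →ₗ[A] X j, f = 0)
    (hsc : ∀ i, ∀ f : X i →ₗ[A] X i, ∃ c : ℂ, ∀ x, f x = c • x)
    (S : Set A) (hS : S = {a : A | spectralRank a < ⊤})
    (n : ℕ) (hbound : ∀ a ∈ S, spectralRank a ≤ (n : ℕ∞)) :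
    FiniteDimensional ℂ (Submodule.span ℂ S) := by
  have hiff : ∀ a, a ∈ S ↔
      FiniteDimensional ℂ (LinearMap.range (Algebra.lsmul ℂ ℂ (Π₀ i, X i) a)) := fun a =>
    ⟨fun h => aux_range X hne hsc a n (hbound a h),
      fun h => by rw [hS]; exact aux_rank hss X hex a h⟩
  have hzero : (0 : A) ∈ S := by
    rw [hiff, map_zero, LinearMap.range_zero]; infer_instance
  have hadd : ∀ a b, a ∈ S → b ∈ S → a + b ∈ S := by
    intro a b ha hb
    rw [hiff] at *
    rw [map_add]
    refine Submodule.finiteDimensional_of_le (LinearMap.range_add_le _ _)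
  have hmul : ∀ t a s, a ∈ S → t * a * s ∈ S := by
    intro t a s ha
    rw [hiff] at *
    rw [map_mul, map_mul, Module.End.mul_eq_comp, Module.End.mul_eq_comp]
    have h1 : FiniteDimensional ℂ (LinearMap.range
        ((Algebra.lsmul ℂ ℂ (Π₀ i, X i) t) ∘ₗ (Algebra.lsmul ℂ ℂ (Π₀ i, X i) a))) := by
      rw [LinearMap.range_comp]
      infer_instance
    exact Submodule.finiteDimensional_of_le (LinearMap.range_comp_le_range _ _)
  have hspan : ∀ a ∈ Submodule.span ℂ S, a ∈ S := by
    intro a ha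
    induction ha using Submodule.span_induction with
    | mem x h => exact h
    | zero => exact hzero
    | add x y _ _ hx hy => exact hadd x y hx hy
    | smul c x _ hx =>
      have := hmul (algebraMap ℂ A c) x 1 hx
      rwa [mul_one, ← Algebra.smul_def] at this
  let H : Set (Π₀ i, X i) :=
    {m | ∃ i, ∃ x : X i, m = DFinsupp.single i x ∧ ∃ a ∈ S, ∃ y : X i, a • y ≠ 0}
  have hH : FiniteDimensional ℂ (Submodule.span ℂ H) := by
    apply aux_finite H (n + 1)
    intro v hv hli
    choose k x hx a ha y hy using hv
    have hv' : v = fun j => DFinsupp.single (k j) (x j) := funext hx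
    rw [hv'] at hli
    have hx0 : ∀ j, x j ≠ 0 := by
      intro j h0
      apply hli.ne_zero j
      simp [h0]
    have hb : ∀ j, ∃ b ∈ S, b • x j = (((j : ℕ) : ℂ) + 1) • x j := by
      intro j
      obtain ⟨s, hs⟩ := IsSimpleModule.toSpanSingleton_surjective A (hx0 j) (y j)
      rw [LinearMap.toSpanSingleton_apply] at hs
      obtain ⟨t, ht⟩ := IsSimpleModule.toSpanSingleton_surjective A (hy j)
        ((((j : ℕ) : ℂ) + 1) • x j)
      rw [LinearMap.toSpanSingleton_apply] at ht
      exact ⟨t * a j * s, hmul _ _ _ (ha j), by rw [mul_smul, mul_smul, hs, ht]⟩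
    choose b hbS hbx using hb
    have he : ∀ j, ∃ e : A, ∀ l, e • x l = if l = j then x l else 0 := fun j =>
      aux_dense X hne hsc k x (fun l => if l = j then x l else 0) hli
    choose e he using he
    have hB : ∑ j, b j * e j ∈ S := by
      refine Finset.sum_induction _ (· ∈ S) hadd hzero (fun j _ => ?_)
      have := hmul 1 (b j) (e j) (hbS j)
      rwa [one_mul] at this
    have h1 := aux_count X (∑ j, b j * e j) k x hx0 (fun l => by
      rw [Finset.sum_smul, Finset.sum_eq_single l]
      · rw [mul_smul, he, if_pos rfl, hbx]
      · intro j _ hj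
        rw [mul_smul, he, if_neg (Ne.symm hj), smul_zero]
      · simp)
    have h4 := le_iSup (fun y : A => ((spectrum ℂ (y * ∑ j, b j * e j)) \ {0}).encard) 1
    simp only [one_mul] at h4
    have h2 : ((n + 1 : ℕ) : ℕ∞) ≤ n := h1.trans (h4.trans (hbound _ hB))
    have h3 : n + 1 ≤ n := by exact_mod_cast h2
    omega
  let P : Submodule A (Π₀ i, X i) :=
    { (Submodule.span ℂ H).toAddSubmonoid with
      smul_mem' := by
        intro r m hm
        change m ∈ Submodule.span ℂ H at hm
        change r • m ∈ Submodule.span ℂ H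
        induction hm using Submodule.span_induction with
        | mem m h =>
          obtain ⟨i, x, rfl, h⟩ := h
          rw [← DFinsupp.single_smul]
          exact Submodule.subset_span ⟨i, _, rfl, h⟩
        | zero => rw [smul_zero]; exact Submodule.zero_mem _
        | add x y _ _ hx hy => rw [smul_add]; exact Submodule.add_mem _ hx hy
        | smul c x _ hx => rw [smul_comm]; exact Submodule.smul_mem _ _ hx }
  have hPfin : FiniteDimensional ℂ P := hH
  let Θ : Submodule.span ℂ S →ₗ[ℂ] (P →ₗ[ℂ] P) :=
    ((Algebra.lsmul ℂ ℂ P).toLinearMap.domRestrict (Submodule.span ℂ S))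
  refine Module.Finite.of_injective Θ ?_
  rw [injective_iff_map_eq_zero]
  rintro ⟨a, haS⟩ h0
  have ha := hspan a haS
  apply Subtype.ext
  apply aux_faithful hss X hex a
  intro i x
  by_contra hax
  have hmem : (DFinsupp.single i x : Π₀ i, X i) ∈ P :=
    Submodule.subset_span (s := H) ⟨i, x, rfl, a, ha, x, hax⟩
  have h1 : a • (⟨DFinsupp.single i x, hmem⟩ : P) = 0 := LinearMap.congr_fun h0 _
  have h2 : a • (DFinsupp.single i x : Π₀ i, X i) = 0 := congrArg Subtype.val h1
  rw [← DFinsupp.single_smul] at h2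
  exact hax (DFinsupp.single_eq_zero.mp h2)

theorem stmt1 {A : Type*} [NormedRing A] [NormedAlgebra ℂ A] [CompleteSpace A]
    (hss : ∀ a : A, (∀ x : A, spectralRadius ℂ (x * a) = 0) → a = 0)
    (S : Set A) (hS : S = {a : A | spectralRank a < ⊤})
    (n : ℕ) (hbound : ∀ a ∈ S, spectralRank a ≤ (n : ℕ∞)) :
    FiniteDimensional ℂ (Submodule.span ℂ S) := by
  classical
  let st : Setoid {m : Ideal A // m.IsMaximal} :=
    { r := fun m m' => Nonempty ((A ⧸ m.1) ≃ₗ[A] (A ⧸ m'.1))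
      iseqv := ⟨fun _ => ⟨LinearEquiv.refl _ _⟩, fun ⟨e⟩ => ⟨e.symm⟩,
        fun ⟨e⟩ ⟨e'⟩ => ⟨e.trans e'⟩⟩ }
  have hmax : ∀ i : Quotient st, i.out.1.IsMaximal := fun i => i.out.2
  have hsimp : ∀ i : Quotient st, IsSimpleModule A (A ⧸ i.out.1) := fun i =>
    isSimpleModule_iff_isCoatom.mpr (hmax i).1
  refine aux_main hss (fun i : Quotient st => A ⧸ i.out.1) ?_ ?_ ?_ S hS n hbound
  · intro m hm
    refine ⟨Quotient.mk st ⟨m, hm⟩, ?_⟩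
    exact Setoid.symm (Quotient.mk_out (s := st) ⟨m, hm⟩)
  · intro i j hij f
    rcases f.bijective_or_eq_zero with hb | h0
    · exfalso
      apply hij
      rw [← Quotient.out_equiv_out]
      exact ⟨LinearEquiv.ofBijective f hb⟩
    · exact h0
  · intro i f
    exact aux_schur i.out.1 f
end

section
/- Let A be a semisimple unital complex Banach algebra and let S denote the set of finite-rank elements of A. If there exists a nonnegative integer n such that rank(a) ≤ n for every a ∈ S, then there exists an idempotent p ∈ S (p·p = p) such that S = { p·x·p : x ∈ A }. -/
open scoped ENNReal

set_option linter.unusedSectionVars false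
namespace FR
open Polynomial Filter

variable {A : Type*} [NormedRing A] [NormedAlgebra ℂ A] [CompleteSpace A]

/-- growth formulation of quasinilpotence -/
def QN (a : A) : Prop := ∀ ε : ℝ, 0 < ε → ∀ᶠ k : ℕ in atTop, ‖a ^ k‖ ≤ ε ^ k

lemma specRad_zero {a : A} (h : spectrum ℂ a \ {0} = ∅) : spectralRadius ℂ a = 0 := by
  unfold spectralRadius
  simp only [ENNReal.iSup_eq_zero]
  intro i hi
  by_contra hne
  have : i ∈ spectrum ℂ a \ {0} := ⟨hi, by rintro rfl; simp at hne⟩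
  rw [h] at this
  exact this

lemma qn_of_spec {a : A} (h : spectrum ℂ a \ {0} = ∅) : QN a := by
  intro ε hε
  have h1 := spectrum.pow_norm_pow_one_div_tendsto_nhds_spectralRadius a
  rw [specRad_zero h] at h1
  have h2 := h1.eventually (gt_mem_nhds (ENNReal.ofReal_pos.2 hε))
  filter_upwards [h2, eventually_gt_atTop 0] with k hk hk0
  rw [ENNReal.ofReal_lt_ofReal_iff hε] at hk
  have h3 : (‖a ^ k‖ ^ (1 / k : ℝ)) ^ k ≤ ε ^ k :=
    pow_le_pow_left₀ (by positivity) hk.le k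
  rwa [one_div, Real.rpow_inv_natCast_pow (norm_nonneg _) hk0.ne'] at h3

lemma spec_of_qn {a : A} (h : QN a) : spectrum ℂ a \ {0} = ∅ := by
  rw [Set.eq_empty_iff_forall_notMem]
  rintro l ⟨hl, hl0⟩
  have hl0 : l ≠ 0 := hl0
  have hp : 0 < ‖l‖ := norm_pos_iff.2 hl0
  have h1 := h (‖l‖ / 2) (by positivity)
  have h2 := (tendsto_pow_atTop_atTop_of_one_lt (r := (2 : ℝ)) (by norm_num)).eventually_gt_atTop ‖(1 : A)‖
  obtain ⟨k, hk1, hk2⟩ := (h1.and h2).exists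
  have h3 : l ^ k ∈ spectrum ℂ (a ^ k) := spectrum.pow_image_subset a k ⟨l, hl, rfl⟩
  have h4 := spectrum.norm_le_norm_mul_of_mem h3
  rw [norm_pow] at h4
  have h5 : ‖l‖ ^ k ≤ (‖l‖ / 2) ^ k * ‖(1 : A)‖ := h4.trans (by gcongr)
  rw [div_pow] at h5
  have h6 : 0 < ‖l‖ ^ k := by positivity
  have h7 : ‖l‖ ^ k * 2 ^ k ≤ ‖l‖ ^ k * ‖(1 : A)‖ := by
    have := mul_le_mul_of_nonneg_right h5 (by positivity : (0 : ℝ) ≤ 2 ^ k)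
    calc _ ≤ _ := this
      _ = _ := by field_simp
  have := le_of_mul_le_mul_left h7 h6
  linarith

lemma QN.mul {a b : A} (h : QN a) (hab : Commute a b) : QN (a * b) := by
  intro ε hε
  filter_upwards [h (ε / (‖b‖ + 1)) (by positivity), eventually_gt_atTop 0] with k hk hk0
  rw [hab.mul_pow]
  calc _ ≤ ‖a ^ k‖ * ‖b ^ k‖ := norm_mul_le _ _
    _ ≤ (ε / (‖b‖ + 1)) ^ k * (‖b‖ + 1) ^ k := by
        gcongr
        exact (norm_pow_le' b hk0).trans (by gcongr; linarith)
    _ = ε ^ k := by rw [← mul_pow]; congr 1; field_simp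

lemma isUnit_of_qn {a : A} (h : QN a) (c : ℂ) (hc : c ≠ 0) : IsUnit (algebraMap ℂ A c - a) := by
  by_contra hn
  have : c ∈ spectrum ℂ a \ {0} := ⟨hn, hc⟩
  rw [spec_of_qn h] at this
  exact this

/-- quadratic equation solved by the Catalan series -/
lemma catalan_sol {a : A} (h : QN a) :
    ∃ C : A, (∀ z, Commute z a → Commute z C) ∧ C = 1 + a * (C * C) := by
  let f : ℕ → A := fun k => (catalan k : ℂ) • a ^ k
  have hs : Summable (fun k => ‖f k‖) := by
    have h1 : ∀ᶠ k in atTop, ‖f k‖ ≤ (1 / 2 : ℝ) ^ k := by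
      filter_upwards [h (1 / 8) (by norm_num)] with k hk
      have hc : (catalan k : ℝ) ≤ 4 ^ k := by
        have : catalan k ≤ 4 ^ k := by
          refine le_trans ?_ (Nat.centralBinom_le_four_pow k)
          rw [catalan_eq_centralBinom_div]
          exact Nat.div_le_self _ _
        exact_mod_cast this
      simp only [f, norm_smul]
      rw [Complex.norm_natCast]
      calc (catalan k : ℝ) * ‖a ^ k‖ ≤ 4 ^ k * (1 / 8) ^ k := by gcongr
        _ = (1 / 2) ^ k := by rw [← mul_pow]; norm_num
    refine Summable.of_norm_bounded_eventually_nat (g := fun k => (1 / 2 : ℝ) ^ k)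
      (summable_geometric_two) ?_
    simpa using h1
  refine ⟨∑' k, f k, ?_, ?_⟩
  · intro z hz
    exact Commute.tsum_right z fun k => (hz.pow_right k).smul_right _
  · rw [tsum_mul_tsum_eq_tsum_sum_antidiagonal_of_summable_norm hs hs]
    rw [hs.of_norm.tsum_eq_zero_add]
    congr 1
    · simp [f]
    · have hs2 : Summable (fun k => f (k + 1)) := (summable_nat_add_iff 1).2 hs.of_norm
      have := summable_norm_sum_mul_antidiagonal_of_summable_norm hs hs
      rw [← Summable.tsum_mul_left a this.of_norm]
      congr 1
      ext k
      simp only [f, catalan_succ']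
      rw [Finset.mul_sum]
      push_cast
      rw [Finset.sum_smul]
      refine Finset.sum_congr rfl fun ij hij => ?_
      rw [Finset.HasAntidiagonal.mem_antidiagonal] at hij
      rw [← hij, smul_mul_smul_comm, ← pow_add, mul_smul_comm, pow_succ']

lemma lift_idem {c : A} (h : QN (c - c * c)) (h1 : (1 : ℂ) ∈ spectrum ℂ c) :
    ∃ g : A, (∀ z, Commute z c → Commute z g) ∧ (c * g) * (c * g) = c * g ∧ c * g ≠ 0 := by
  obtain ⟨C, hC, hCe⟩ := catalan_sol h
  set n := c - c * c with hn
  have hzn : ∀ z, Commute z c → Commute z n := fun z hz => hz.sub_right (hz.mul_right hz)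
  have hzC : ∀ z, Commute z c → Commute z C := fun z hz => hC z (hzn z hz)
  have hcC : Commute c C := hzC c rfl
  have hnC : Commute n C := hC n rfl
  have hcn : Commute c n := hzn c rfl
  have hwq : QN (n * C) := h.mul hnC
  set w := n * C with hw
  have hzw : ∀ z, Commute z c → Commute z w := fun z hz => (hzn z hz).mul_right (hzC z hz)
  have hcw : Commute c w := hzw c rfl
  have hww : w * w = w - n := by
    have : w = n + w * w := by
      calc w = n * C := rfl
        _ = n * (1 + n * (C * C)) := by rw [← hCe]
        _ = n + n * (n * C) * C := by noncomm_ring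
        _ = n + n * (C * n) * C := by rw [hnC.eq]
        _ = n + w * w := by rw [hw]; noncomm_ring
    rw [eq_sub_iff_add_eq, add_comm]; exact this.symm
  have hu : IsUnit (1 - 2 * w) := by
    have h2 : QN (w * 2) := hwq.mul (Commute.ofNat_right w 2)
    have := isUnit_of_qn h2 1 one_ne_zero
    rw [map_one] at this
    rwa [(Commute.ofNat_right w 2).eq] at this
  obtain ⟨u, hu⟩ := hu
  have hzu : ∀ z, Commute z c → Commute z (↑u⁻¹ : A) := by
    intro z hz
    apply Commute.units_inv_right
    rw [hu]
    exact (Commute.one_right z).sub_right ((Commute.ofNat_right z 2).mul_right (hzw z hz))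
  let g := (1 - (1 - c) * C) * (↑u⁻¹ : A)
  have hcg : c * g = (c - w) * (↑u⁻¹ : A) := by
    simp only [g]
    rw [← mul_assoc]
    congr 1
    rw [hw, hn]; noncomm_ring
  have hcu := hzu c rfl
  have hwu : Commute w (↑u⁻¹ : A) := by
    apply Commute.units_inv_right
    rw [hu]
    exact (Commute.one_right w).sub_right ((Commute.ofNat_right w 2).mul_right rfl)
  have hsq : (c - w) * (c - w) = (c - w) * u := by
    have hcc : c * c = c - n := by rw [hn]; noncomm_ring
    rw [hu]
    calc (c - w) * (c - w) = c * c - c * w - w * c + w * w := by noncomm_ring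
      _ = c - n - c * w - c * w + (w - n) := by rw [hcc, hww, hcw.eq]
      _ = c - 2 * (c * w) - w + 2 * (w - n) := by noncomm_ring
      _ = c - 2 * (c * w) - w + 2 * (w * w) := by rw [hww]
      _ = _ := by noncomm_ring
  refine ⟨g, ?_, ?_, ?_⟩
  · intro z hz
    exact ((Commute.one_right z).sub_right
      (((Commute.one_right z).sub_right hz).mul_right (hzC z hz))).mul_right (hzu z hz)
  · rw [hcg]
    calc (c - w) * ↑u⁻¹ * ((c - w) * ↑u⁻¹) = (c - w) * (↑u⁻¹ * (c - w)) * ↑u⁻¹ := by noncomm_ring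
      _ = (c - w) * ((c - w) * ↑u⁻¹) * ↑u⁻¹ := by rw [(hcu.sub_left hwu).eq]
      _ = ((c - w) * (c - w)) * ↑u⁻¹ * ↑u⁻¹ := by noncomm_ring
      _ = (c - w) * ↑u⁻¹ := by rw [hsq, Units.mul_inv_cancel_right]
  · rw [hcg]
    intro h0
    have : c - w = 0 := by
      have := congrArg (· * (u : A)) h0
      simpa using this
    have hcw' : c = w := sub_eq_zero.1 this
    have hm : (1 : ℂ) ∈ spectrum ℂ w \ {0} := ⟨hcw' ▸ h1, by simp⟩
    rw [spec_of_qn hwq] at hm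
    exact hm

lemma exists_idem {d : A} (hf : (spectrum ℂ d \ {0}).Finite) (hne : spectrum ℂ d \ {0} ≠ ∅) :
    ∃ y : A, Commute d y ∧ (d * y) * (d * y) = d * y ∧ d * y ≠ 0 := by
  classical
  obtain ⟨l, hl, hl0⟩ := Set.nonempty_iff_ne_empty.2 hne
  have hl0 : l ≠ 0 := hl0
  let s := hf.toFinset
  let r : ℂ[X] := Lagrange.interpolate s id (fun z => z⁻¹)
  have hr : ∀ z ∈ spectrum ℂ d, z ≠ 0 → z * r.eval z = 1 := by
    intro z hz hz0
    have : r.eval z = z⁻¹ := Lagrange.eval_interpolate_at_node (v := id) (fun z : ℂ => z⁻¹)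
      (Set.injOn_id _) (i := z) (by simp [s, hz, hz0])
    rw [this, mul_inv_cancel₀ hz0]
  let P : ℂ[X] := X * r
  have hc : aeval d P = d * aeval d r := by simp [P]
  have hdr : Commute d (aeval d r) := by
    have := Commute.map (Commute.all X r) (aeval (R := ℂ) d)
    simpa using this
  have h1 : (1 : ℂ) ∈ spectrum ℂ (aeval d P) :=
    spectrum.subset_polynomial_aeval d P ⟨l, hl, by simp [P, hr l hl hl0]⟩
  have hq : QN (aeval d P - aeval d P * aeval d P) := by
    apply qn_of_spec
    rw [← map_mul, ← map_sub, spectrum.map_polynomial_aeval_of_nonempty _ _ ⟨l, hl⟩]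
    rw [Set.eq_empty_iff_forall_notMem]
    rintro _ ⟨⟨z, hz, rfl⟩, h0⟩
    apply h0
    by_cases hz0 : z = 0
    · simp [P, hz0]
    · simp [P, hr z hz hz0]
  obtain ⟨g, hg, hgg, hg0⟩ := lift_idem hq h1
  rw [hc] at hg hgg hg0
  refine ⟨aeval d r * g, hdr.mul_right (hg d ((Commute.refl d).mul_right hdr)), ?_, ?_⟩
  · simpa only [mul_assoc] using hgg
  · rw [← mul_assoc]; exact hg0

lemma rank_mul_left (x a : A) : spectralRank (x * a) ≤ spectralRank a := by
  refine iSup_le fun y => ?_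
  rw [← mul_assoc]
  exact le_iSup (fun x : A => ((spectrum ℂ (x * a)) \ {0}).encard) (y * x)

lemma rank_mul_right (a x : A) : spectralRank (a * x) ≤ spectralRank a := by
  refine iSup_le fun y => ?_
  rw [← mul_assoc, spectrum.nonzero_mul_comm, ← mul_assoc]
  exact le_iSup (fun x : A => ((spectrum ℂ (x * a)) \ {0}).encard) (x * y)

lemma encard_le_rank (a : A) : (spectrum ℂ a \ {0}).encard ≤ spectralRank a := by
  have := le_iSup (fun x : A => ((spectrum ℂ (x * a)) \ {0}).encard) 1
  simp only [one_mul] at this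
  exact this

lemma finite_spec {a : A} (h : spectralRank a < ⊤) : (spectrum ℂ a \ {0}).Finite :=
  Set.encard_lt_top_iff.1 ((encard_le_rank a).trans_lt h)

lemma mem_spec_of_mul {z v : A} {c : ℂ} (hv : v ≠ 0) (h : z * v = c • v) : c ∈ spectrum ℂ z := by
  intro hu
  apply hv
  have : (algebraMap ℂ A c - z) * v = 0 := by
    rw [sub_mul, h, Algebra.smul_def, sub_self]
  exact hu.mul_right_eq_zero.1 this

lemma block_unit {e d y : A} {l : ℂ} (he : e * e = e) (hl0 : l ≠ 0) (hed : e * d = d)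
    (hde : d * e = d) (hey : e * y = y) (hye : y * e = y) (hdy : d * y = e) (hyd : y * d = e) :
    IsUnit (l • (1 - e) + d) := by
  rw [isUnit_iff_exists]
  have h3 : (1 - e) * (1 - e) = 1 - e := by
    rw [sub_mul, mul_sub, mul_sub, he]; simp
  refine ⟨l⁻¹ • (1 - e) + y, ?_, ?_⟩
  · rw [add_mul, mul_add, mul_add, smul_mul_smul_comm, smul_mul_assoc, mul_smul_comm, h3, hdy,
      mul_inv_cancel₀ hl0, sub_mul, mul_sub, hey, hde]
    simp
  · rw [add_mul, mul_add, mul_add, smul_mul_smul_comm, smul_mul_assoc, mul_smul_comm, h3, hyd,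
      inv_mul_cancel₀ hl0, sub_mul, mul_sub, hed, hye]
    simp

/-- an idempotent commuting with `z` cuts the spectrum -/
lemma spec_cut {z e : A} (he : e * e = e) (hez : Commute e z) :
    spectrum ℂ (e * z) \ {0} ⊆ spectrum ℂ z \ {0} := by
  rintro l ⟨hl, hl0⟩
  refine ⟨?_, hl0⟩
  have hl0 : l ≠ 0 := hl0
  intro hu
  apply hl
  change IsUnit (algebraMap ℂ A l - z) at hu
  change IsUnit (algebraMap ℂ A l - e * z)
  obtain ⟨u, hu⟩ := hu
  have heu : Commute e (u : A) := by
    rw [hu]; exact (Algebra.commute_algebraMap_right l e).sub_right hez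
  have hei : Commute e (↑u⁻¹ : A) := heu.units_inv_right
  have hz : z = algebraMap ℂ A l - u := by rw [hu]; noncomm_ring
  have key : algebraMap ℂ A l - e * z = l • (1 - e) + e * u := by
    rw [hz, mul_sub, ← Algebra.commutes l e, Algebra.algebraMap_eq_smul_one, smul_sub,
      smul_mul_assoc, one_mul]
    abel
  rw [key]
  have hee : ∀ v w : A, Commute e v → v * w = 1 → e * v * (e * w) = e := by
    intro v w hv hvw
    calc e * v * (e * w) = e * (v * e) * w := by simp only [mul_assoc]
      _ = e * e * (v * w) := by rw [← hv.eq]; simp only [mul_assoc]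
      _ = e := by rw [he, hvw, mul_one]
  refine block_unit (y := e * ↑u⁻¹) he hl0 ?_ ?_ ?_ ?_ ?_ ?_
  · rw [← mul_assoc, he]
  · rw [mul_assoc, ← heu.eq, ← mul_assoc, he]
  · rw [← mul_assoc, he]
  · rw [mul_assoc, ← hei.eq, ← mul_assoc, he]
  · exact hee _ _ heu (Units.mul_inv u)
  · exact hee _ _ hei (Units.inv_mul u)

lemma rank_sub {q e : A} (hq : q * q = q) (he : e * e = e) (hqe : q * e = e) (heq : e * q = e)
    (hne : e ≠ q) {r : ℕ} (hr : spectralRank q ≤ (r + 1 : ℕ)) : spectralRank e ≤ r := by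
  refine iSup_le fun x => ?_
  have h1 : spectrum ℂ (x * e) \ {0} = spectrum ℂ (e * x * e) \ {0} := by
    rw [← he, ← mul_assoc, spectrum.nonzero_mul_comm, he, mul_assoc]
  have hef : spectralRank e < ⊤ := by
    rw [← hqe]
    exact (rank_mul_right q e).trans_lt (hr.trans_lt (ENat.natCast_lt_top _))
  have hfin : (spectrum ℂ (e * x * e) \ {0}).Finite :=
    finite_spec ((rank_mul_left _ _).trans_lt hef)
  rw [h1]
  obtain ⟨c, hc⟩ := (hfin.insert 0).exists_notMem
  have hc0 : c ≠ 0 := by rintro rfl; simp at hc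
  have hcs : c ∉ spectrum ℂ (e * x * e) \ {0} := fun h => hc (Set.mem_insert_of_mem _ h)
  let z := e * x * e + c • (q - e)
  have hez : e * z = e * x * e := by
    simp only [z, mul_add, mul_smul_comm, mul_sub, heq, he, sub_self, smul_zero, add_zero,
      ← mul_assoc]
  have hze : z * e = e * x * e := by
    simp only [z, add_mul, smul_mul_assoc, sub_mul, hqe, he, sub_self, smul_zero, add_zero,
      mul_assoc]
  have hzq : z * q = z := by
    simp only [z, add_mul, smul_mul_assoc, sub_mul, hq, heq, mul_assoc]
  have hsub : insert c (spectrum ℂ (e * x * e) \ {0}) ⊆ spectrum ℂ z \ {0} := by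
    rw [Set.insert_subset_iff]
    constructor
    · refine ⟨mem_spec_of_mul (v := q - e) (sub_ne_zero.2 hne.symm) ?_, hc0⟩
      rw [mul_sub, hzq, hze]
      simp [z]
    · rw [← hez]
      exact spec_cut he (by rw [Commute, SemiconjBy, hez, hze])
  have h2 := (Set.encard_le_encard hsub).trans (encard_le_rank z)
  have h3 : spectralRank z ≤ spectralRank q := by rw [← hzq]; exact rank_mul_left _ _
  have h4 := (h2.trans h3).trans hr
  rw [Set.encard_insert_of_notMem hcs] at h4
  push_cast at h4
  exact (ENat.add_le_add_iff_right ENat.one_ne_top).1 h4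

lemma exists_prim (r : ℕ) : ∀ q : A, q * q = q → q ≠ 0 → spectralRank q ≤ r →
    ∃ e : A, e * e = e ∧ e ≠ 0 ∧ q * e = e ∧ e * q = e ∧ spectralRank e < ⊤ ∧
      ∀ f : A, f * f = f → e * f = f → f * e = f → f ≠ 0 → f = e := by
  induction r with
  | zero =>
    intro q hq hq0 hr
    exfalso
    have h1 : (1 : ℂ) ∈ spectrum ℂ q \ {0} := ⟨mem_spec_of_mul hq0 (by simpa using hq), by simp⟩
    have h2 := (encard_le_rank q).trans hr
    simp only [Nat.cast_zero, nonpos_iff_eq_zero, Set.encard_eq_zero] at h2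
    rw [h2] at h1
    exact h1
  | succ r ih =>
    intro q hq hq0 hr
    by_cases hp : ∀ f : A, f * f = f → q * f = f → f * q = f → f ≠ 0 → f = q
    · exact ⟨q, hq, hq0, hq, hq, hr.trans_lt (ENat.natCast_lt_top _), hp⟩
    · push Not at hp
      obtain ⟨f, hf, hqf, hfq, hf0, hne⟩ := hp
      obtain ⟨e, he, he0, hfe, hef, her, hprim⟩ := ih f hf hf0 (rank_sub hq hf hqf hfq hne hr)
      refine ⟨e, he, he0, ?_, ?_, her, hprim⟩
      · rw [← hfe, ← mul_assoc, hqf]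
      · rw [← hef, mul_assoc, hfq]

lemma exists_ne_of_ss (hss : ∀ a : A, (∀ x : A, spectralRadius ℂ (x * a) = 0) → a = 0)
    {a : A} (ha : a ≠ 0) : ∃ x : A, spectrum ℂ (x * a) \ {0} ≠ ∅ := by
  by_contra h
  push Not at h
  exact ha (hss a fun x => specRad_zero (h x))

/-- `e` is a minimal idempotent -/
def MinIdem (e : A) : Prop := e * e = e ∧ e ≠ 0 ∧ ∀ x : A, ∃ c : ℂ, e * x * e = c • e

lemma min_of_prim (hss : ∀ a : A, (∀ x : A, spectralRadius ℂ (x * a) = 0) → a = 0)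
    {e : A} (he : e * e = e) (he0 : e ≠ 0) (hr : spectralRank e < ⊤)
    (hp : ∀ f : A, f * f = f → e * f = f → f * e = f → f ≠ 0 → f = e) : MinIdem e := by
  refine ⟨he, he0, ?_⟩
  -- elements of the corner with nonzero spectrum are invertible there
  have inv : ∀ z : A, e * z = z → z * e = z → spectrum ℂ z \ {0} ≠ ∅ →
      ∃ y, Commute z y ∧ z * y = e := by
    intro z hez hze hz
    have hzr : spectralRank z < ⊤ := by
      rw [← hze]; exact (rank_mul_left _ _).trans_lt hr
    obtain ⟨y, hzy, hyy, hy0⟩ := exists_idem (finite_spec hzr) hz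
    refine ⟨y, hzy, hp _ hyy ?_ ?_ hy0⟩
    · rw [← mul_assoc, hez]
    · rw [hzy.eq, mul_assoc, hze]
  -- nonzero elements are left invertible in the corner
  have linv : ∀ z : A, e * z = z → z * e = z → z ≠ 0 →
      ∃ y, e * y = y ∧ y * e = y ∧ y * z = e := by
    intro z hez hze hz
    obtain ⟨x, hx⟩ := exists_ne_of_ss hss hz
    have h1 : spectrum ℂ (x * z) \ {0} = spectrum ℂ (e * x * z) \ {0} := by
      conv_lhs => rw [← hze, ← mul_assoc, spectrum.nonzero_mul_comm, ← mul_assoc]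
    rw [h1] at hx
    obtain ⟨y, hy, hyz⟩ := inv (e * x * z) (by simp only [← mul_assoc, he])
      (by rw [mul_assoc, hze]) hx
    refine ⟨e * (y * (e * x)) * e, by simp only [← mul_assoc, he], by simp only [mul_assoc, he], ?_⟩
    have : y * (e * x * z) = e := by rw [← hy.eq, hyz]
    calc e * (y * (e * x)) * e * z = e * (y * (e * x * (e * z))) := by simp only [mul_assoc]
      _ = e := by rw [hez, this, he]
  have tinv : ∀ z : A, e * z = z → z * e = z → z ≠ 0 →
      ∃ y, e * y = y ∧ y * e = y ∧ y * z = e ∧ z * y = e := by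
    intro z hez hze hz
    obtain ⟨y, hey, hye, hyz⟩ := linv z hez hze hz
    have hy0 : y ≠ 0 := by
      rintro rfl
      rw [zero_mul] at hyz
      exact he0 hyz.symm
    obtain ⟨w, hew, hwe, hwy⟩ := linv y hey hye hy0
    have : w = z := by
      calc w = w * (y * z) := by rw [hyz, hwe]
        _ = z := by rw [← mul_assoc, hwy, hez]
    exact ⟨y, hey, hye, hyz, by rw [← this, hwy]⟩
  intro x
  set z := e * x * e with hz
  have hez : e * z = z := by simp only [hz, ← mul_assoc, he]
  have hze : z * e = z := by simp only [hz, mul_assoc, he]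
  by_cases hz0 : z = 0
  · exact ⟨0, by rw [hz0]; simp⟩
  have hsp : spectrum ℂ z \ {0} ≠ ∅ := by
    intro hemp
    obtain ⟨y, hey, hye, hyz, hzy⟩ := tinv z hez hze hz0
    have hq := (qn_of_spec hemp).mul (b := y) (by rw [Commute, SemiconjBy, hyz, hzy])
    rw [hzy] at hq
    have h1 : (1 : ℂ) ∈ spectrum ℂ e \ {0} := ⟨mem_spec_of_mul he0 (by simpa using he), by simp⟩
    rw [spec_of_qn hq] at h1
    exact h1
  obtain ⟨l, hl, hl0⟩ := Set.nonempty_iff_ne_empty.2 hsp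
  have hl0 : l ≠ 0 := hl0
  refine ⟨l, ?_⟩
  by_contra hne
  have hd : l • e - z ≠ 0 := fun h => hne (sub_eq_zero.1 h).symm
  obtain ⟨y, hey, hye, hyz, hzy⟩ := tinv (l • e - z)
    (by rw [mul_sub, mul_smul_comm, he, hez]) (by rw [sub_mul, smul_mul_assoc, he, hze]) hd
  apply hl
  change IsUnit (algebraMap ℂ A l - z)
  have key : algebraMap ℂ A l - z = l • (1 - e) + (l • e - z) := by
    rw [Algebra.algebraMap_eq_smul_one, smul_sub]; abel
  rw [key]
  exact block_unit he hl0 (by rw [mul_sub, mul_smul_comm, he, hez])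
    (by rw [sub_mul, smul_mul_assoc, he, hze]) hey hye hzy hyz

lemma min_pair (hss : ∀ a : A, (∀ x : A, spectralRadius ℂ (x * a) = 0) → a = 0)
    {e f : A} (he : MinIdem e) (hf : MinIdem f) :
    ∃ g : A, ∀ x : A, ∃ c : ℂ, e * x * f = c • g := by
  by_cases h : ∀ x, e * x * f = 0
  · exact ⟨0, fun x => ⟨0, by rw [h x]; simp⟩⟩
  push Not at h
  obtain ⟨x, hx⟩ := h
  refine ⟨e * x * f, fun z => ?_⟩
  obtain ⟨y, hy⟩ := exists_ne_of_ss hss hx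
  -- `f y e x f` is a nonzero multiple of `f`
  obtain ⟨c, hc⟩ := hf.2.2 (y * e * x)
  have hc0 : c ≠ 0 := by
    rintro rfl
    rw [zero_smul] at hc
    apply hy
    have h1 : y * (e * x * f) = (y * e * x * f) * f := by
      simp only [mul_assoc, hf.1]
    rw [h1, spectrum.nonzero_mul_comm, show f * (y * e * x * f) = f * (y * e * x) * f by
      simp only [mul_assoc], hc]
    rw [Set.eq_empty_iff_forall_notMem]
    rintro l ⟨hl, hl0⟩
    have hl0 : l ≠ 0 := hl0
    apply hl
    change IsUnit (algebraMap ℂ A l - 0)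
    rw [sub_zero]
    exact (IsUnit.mk0 l hl0).map (algebraMap ℂ A)
  obtain ⟨b, hb⟩ := he.2.2 (z * f * y)
  refine ⟨c⁻¹ * b, ?_⟩
  have h1 : e * z * (f * (y * e * x) * f) = c • (e * z * f) := by rw [hc, mul_smul_comm]
  have h2 : e * z * (f * (y * e * x) * f) = b • (e * x * f) := by
    calc _ = e * (z * f * y) * e * x * f := by simp only [mul_assoc]
      _ = _ := by rw [hb]; simp only [smul_mul_assoc]
  rw [mul_smul, ← h2, h1, smul_smul, inv_mul_cancel₀ hc0, one_smul]

lemma rank_fin_of_findim {p : A} (hp : p * p = p) (V : Submodule ℂ A) [FiniteDimensional ℂ V]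
    (hV : ∀ x, p * x * p ∈ V) : spectralRank p < ⊤ := by
  let N := Module.finrank ℂ V
  refine lt_of_le_of_lt (b := ((N + 1 : ℕ) : ℕ∞)) (iSup_le fun x => ?_) (ENat.natCast_lt_top _)
  have h1 : spectrum ℂ (x * p) \ {0} = spectrum ℂ (p * x * p) \ {0} := by
    rw [← hp, ← mul_assoc, spectrum.nonzero_mul_comm, hp, mul_assoc]
  rw [h1]
  set u := p * x * p with hu
  have hpu : p * u = u := by simp only [hu, ← mul_assoc, hp]
  have hup : u * p = u := by simp only [hu, mul_assoc, hp]
  let φ : degreeLT ℂ (N + 1) →ₗ[ℂ] V :=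
    LinearMap.codRestrict V
      ((LinearMap.mulLeft ℂ p ∘ₗ LinearMap.mulRight ℂ p ∘ₗ (aeval u).toLinearMap) ∘ₗ
        (degreeLT ℂ (N + 1)).subtype) (fun P => by
          simpa [mul_assoc] using hV (aeval u (P : ℂ[X])))
  have hfd : FiniteDimensional ℂ (degreeLT ℂ (N + 1)) :=
    (degreeLTEquiv ℂ (N + 1)).symm.finiteDimensional
  have hker : LinearMap.ker φ ≠ ⊥ := by
    apply LinearMap.ker_ne_bot_of_finrank_lt
    rw [(degreeLTEquiv ℂ (N + 1)).finrank_eq]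
    simp [N]
  obtain ⟨P, hP, hP0⟩ := Submodule.exists_mem_ne_zero_of_ne_bot hker
  have hPz : p * (aeval u (P : ℂ[X]) * p) = 0 := by
    have := congrArg Subtype.val (LinearMap.mem_ker.1 hP)
    simpa [φ] using this
  have hP0' : (P : ℂ[X]) ≠ 0 := fun h => hP0 (Subtype.ext h)
  have hdeg : (P : ℂ[X]).natDegree ≤ N := by
    have := mem_degreeLT.1 P.2
    have := (natDegree_lt_iff_degree_lt hP0').2 this
    omega
  let Q : ℂ[X] := X * (P : ℂ[X])
  have hQ0 : Q ≠ 0 := mul_ne_zero X_ne_zero hP0'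
  have hcomm : Commute u (aeval u (P : ℂ[X])) := by
    have := Commute.map (Commute.all X (P : ℂ[X])) (aeval (R := ℂ) u)
    simpa using this
  have hQz : aeval u Q = 0 := by
    have h3 : aeval u Q = u * aeval u (P : ℂ[X]) := by simp [Q]
    rw [h3]
    calc u * aeval u (P : ℂ[X]) = aeval u (P : ℂ[X]) * (u * p) := by
            rw [hcomm.eq]; congr 1; exact hup.symm
      _ = (u * p) * aeval u (P : ℂ[X]) * p := by
            rw [← mul_assoc, ← hcomm.eq]; congr 2; exact hup.symm
      _ = u * (p * (aeval u (P : ℂ[X]) * p)) := by simp only [mul_assoc]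
      _ = 0 := by rw [hPz, mul_zero]
  have hsub : spectrum ℂ u \ {0} ⊆ (Q.roots.toFinset : Set ℂ) := by
    rintro l ⟨hl, -⟩
    have h4 := spectrum.subset_polynomial_aeval u Q ⟨l, hl, rfl⟩
    rw [hQz] at h4
    have h5 : Q.eval l = 0 := by
      by_contra h0
      apply h4
      change IsUnit (algebraMap ℂ A (Q.eval l) - 0)
      rw [sub_zero]
      exact (IsUnit.mk0 _ h0).map (algebraMap ℂ A)
    simp [hQ0, h5]
  refine (Set.encard_le_encard hsub).trans ?_
  rw [Set.encard_coe_eq_coe_finsetCard]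
  norm_cast
  refine (Multiset.toFinset_card_le _).trans ((card_roots' Q).trans ?_)
  refine natDegree_mul_le.trans ?_
  rw [natDegree_X]
  omega

/-- finite sets of pairwise orthogonal minimal idempotents -/
def Orth (s : Finset A) : Prop :=
  (∀ e ∈ s, MinIdem e) ∧ ∀ e ∈ s, ∀ f ∈ s, e ≠ f → e * f = 0

lemma Orth.mul_sum {s : Finset A} (h : Orth s) {e : A} (he : e ∈ s) : e * ∑ f ∈ s, f = e := by
  rw [Finset.mul_sum, Finset.sum_eq_single_of_mem e he, (h.1 e he).1]
  intro b hb hbe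
  exact h.2 e he b hb hbe.symm

lemma Orth.sum_mul {s : Finset A} (h : Orth s) {e : A} (he : e ∈ s) : (∑ f ∈ s, f) * e = e := by
  rw [Finset.sum_mul, Finset.sum_eq_single_of_mem e he, (h.1 e he).1]
  intro b hb hbe
  exact h.2 b hb e he hbe

lemma Orth.idem {s : Finset A} (h : Orth s) : (∑ f ∈ s, f) * (∑ f ∈ s, f) = ∑ f ∈ s, f := by
  conv_lhs => rw [Finset.sum_mul]
  exact Finset.sum_congr rfl fun e he => h.mul_sum he

lemma Orth.rank_lt (hss : ∀ a : A, (∀ x : A, spectralRadius ℂ (x * a) = 0) → a = 0)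
    {s : Finset A} (h : Orth s) : spectralRank (∑ f ∈ s, f) < ⊤ := by
  classical
  have hg : ∀ ef : A × A, ∃ g : A, ef ∈ s ×ˢ s → ∀ x : A, ∃ c : ℂ, ef.1 * x * ef.2 = c • g := by
    intro ef
    by_cases hef : ef ∈ s ×ˢ s
    · rw [Finset.mem_product] at hef
      obtain ⟨g, hg⟩ := min_pair hss (h.1 _ hef.1) (h.1 _ hef.2)
      exact ⟨g, fun _ => hg⟩
    · exact ⟨0, fun h => absurd h hef⟩
  choose g hg using hg
  let V : Submodule ℂ A := Submodule.span ℂ (((s ×ˢ s).image g : Finset A) : Set A)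
  have : FiniteDimensional ℂ V := FiniteDimensional.span_finset ℂ _
  refine rank_fin_of_findim h.idem V fun x => ?_
  rw [Finset.sum_mul, Finset.sum_mul]
  refine Submodule.sum_mem _ fun e he => ?_
  rw [Finset.mul_sum]
  refine Submodule.sum_mem _ fun f hf => ?_
  have hm : (e, f) ∈ s ×ˢ s := Finset.mem_product.2 ⟨he, hf⟩
  obtain ⟨c, hc⟩ := hg (e, f) hm x
  simp only at hc
  rw [hc]
  exact Submodule.smul_mem _ _ (Submodule.subset_span
    (Finset.mem_coe.2 (Finset.mem_image_of_mem _ hm)))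

lemma Orth.card_le {s : Finset A} (h : Orth s) : (s.card : ℕ∞) ≤ spectralRank (∑ f ∈ s, f) := by
  classical
  let φ : A → ℂ := fun a => if ha : a ∈ s then ((s.equivFin ⟨a, ha⟩ : ℕ) : ℂ) + 1 else 0
  have hφ0 : ∀ a ∈ s, φ a ≠ 0 := by
    intro a ha
    simp only [φ, ha, dif_pos]
    exact Nat.cast_add_one_ne_zero _
  have hinj : Set.InjOn φ s := by
    intro a ha b hb hab
    have ha : a ∈ s := ha
    have hb : b ∈ s := hb
    simp only [φ, ha, hb, dif_pos, add_left_inj, Nat.cast_inj] at hab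
    have := s.equivFin.injective (Fin.ext hab)
    simpa using this
  let y : A := ∑ f ∈ s, φ f • f
  have hyp : y * ∑ f ∈ s, f = y := by
    simp only [y]
    conv_lhs => rw [Finset.sum_mul]
    refine Finset.sum_congr rfl fun e he => ?_
    rw [smul_mul_assoc, h.mul_sum he]
  have hye : ∀ e ∈ s, y * e = φ e • e := by
    intro e he
    simp only [y]
    rw [Finset.sum_mul, Finset.sum_eq_single_of_mem e he, smul_mul_assoc, (h.1 e he).1]
    intro b hb hbe
    rw [smul_mul_assoc, h.2 b hb e he hbe, smul_zero]
  have hsub : φ '' s ⊆ spectrum ℂ y \ {0} := by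
    rintro _ ⟨e, he, rfl⟩
    exact ⟨mem_spec_of_mul (h.1 e he).2.1 (hye e he), hφ0 e he⟩
  have h1 : spectralRank y ≤ spectralRank (∑ f ∈ s, f) := by
    conv_lhs => rw [← hyp]
    exact rank_mul_left _ _
  refine le_trans ?_ ((encard_le_rank y).trans h1)
  refine le_trans ?_ (Set.encard_le_encard hsub)
  rw [hinj.encard_image, Set.encard_coe_eq_coe_finsetCard]

lemma Orth.extend (hss : ∀ a : A, (∀ x : A, spectralRadius ℂ (x * a) = 0) → a = 0)
    {s : Finset A} (h : Orth s) {d : A} (hd : spectralRank d < ⊤)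
    (h1 : (∑ f ∈ s, f) * d = 0) (h2 : d * (∑ f ∈ s, f) = 0) (hne : spectrum ℂ d \ {0} ≠ ∅) :
    ∃ t : Finset A, Orth t ∧ t.card = s.card + 1 := by
  classical
  obtain ⟨y, hdy, hyy, hy0⟩ := exists_idem (finite_spec hd) hne
  have hr : spectralRank (d * y) < ⊤ := (rank_mul_right d y).trans_lt hd
  obtain ⟨r, hr'⟩ := ENat.ne_top_iff_exists.1 hr.ne
  obtain ⟨q, hq, hq0, hyq, hqy, hqr, hprim⟩ := exists_prim r (d * y) hyy hy0 hr'.symm.le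
  have hmin := min_of_prim hss hq hq0 hqr hprim
  have hpq : (∑ f ∈ s, f) * q = 0 := by
    rw [← hyq, ← mul_assoc, ← mul_assoc, h1]; simp
  have hqp : q * (∑ f ∈ s, f) = 0 := by
    rw [← hqy, hdy.eq, mul_assoc, mul_assoc, h2]; simp
  have hfq : ∀ f ∈ s, f * q = 0 := fun f hf => by
    rw [← h.mul_sum hf, mul_assoc, hpq, mul_zero]
  have hqf : ∀ f ∈ s, q * f = 0 := fun f hf => by
    rw [← h.sum_mul hf, ← mul_assoc, hqp, zero_mul]
  have hqs : q ∉ s := fun hm => hq0 (by rw [← hq, hfq q hm])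
  refine ⟨insert q s, ⟨?_, ?_⟩, Finset.card_insert_of_notMem hqs⟩
  · intro e he
    rcases Finset.mem_insert.1 he with rfl | he
    · exact hmin
    · exact h.1 e he
  · intro e he f hf hef
    rcases Finset.mem_insert.1 he with rfl | he'
    · rcases Finset.mem_insert.1 hf with rfl | hf
      · exact absurd rfl hef
      · exact hqf f hf
    · rcases Finset.mem_insert.1 hf with rfl | hf
      · exact hfq e he'
      · exact h.2 e he' f hf hef

end FR

theorem stmt2 {A : Type*} [NormedRing A] [NormedAlgebra ℂ A] [CompleteSpace A]
    (hss : ∀ a : A, (∀ x : A, spectralRadius ℂ (x * a) = 0) → a = 0)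
    (S : Set A) (hS : S = {a : A | spectralRank a < ⊤})
    (n : ℕ) (hbound : ∀ a ∈ S, spectralRank a ≤ (n : ℕ∞)) :
    ∃ p ∈ S, p * p = p ∧ S = {y : A | ∃ x : A, y = p * x * p} := by
  classical
  subst hS
  have hcard : ∀ s : Finset A, FR.Orth s → s.card ≤ n := by
    intro s hs
    have := hs.card_le.trans (hbound _ (hs.rank_lt hss))
    exact_mod_cast this
  -- an orthogonal family of maximal cardinality
  obtain ⟨s, hs, hmax⟩ : ∃ s : Finset A, FR.Orth s ∧ ∀ t : Finset A, FR.Orth t →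
      t.card ≤ s.card := by
    let k := Nat.findGreatest (fun k => ∃ s : Finset A, FR.Orth s ∧ s.card = k) n
    have h0 : ∃ s : Finset A, FR.Orth s ∧ s.card = 0 :=
      ⟨∅, ⟨by simp, by simp⟩, rfl⟩
    obtain ⟨s, hs, hsk⟩ := Nat.findGreatest_spec
      (P := fun k => ∃ s : Finset A, FR.Orth s ∧ s.card = k) (Nat.zero_le n) h0
    refine ⟨s, hs, fun t ht => ?_⟩
    rw [hsk]
    exact Nat.le_findGreatest (hcard t ht) ⟨t, ht, rfl⟩
  have hidem := hs.idem
  have hrank := hs.rank_lt hss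
  have hext : ∀ d : A, spectralRank d < ⊤ → (∑ f ∈ s, f) * d = 0 → d * (∑ f ∈ s, f) = 0 →
      spectrum ℂ d \ {0} = ∅ := by
    intro d hd h1 h2
    by_contra hne
    obtain ⟨t, ht, htc⟩ := hs.extend hss hd h1 h2 hne
    have := hmax t ht
    omega
  generalize (∑ f ∈ s, f) = p at hidem hrank hext
  have e1 : p * (1 - p) = 0 := by rw [mul_sub, hidem]; simp
  have e2 : (1 - p) * p = 0 := by rw [sub_mul, hidem]; simp
  have e3 : (1 - p) * (1 - p) = 1 - p := by rw [sub_mul, e1]; simp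
  refine ⟨p, hrank, hidem, Set.Subset.antisymm ?_ ?_⟩
  · intro a ha
    have ha : spectralRank a < ⊤ := ha
    have hl : (1 - p) * a = 0 := by
      by_contra hne
      obtain ⟨x, hx⟩ := FR.exists_ne_of_ss hss hne
      apply hx
      have : x * ((1 - p) * a) = (x * (1 - p)) * ((1 - p) * a) := by
        rw [mul_assoc x, ← mul_assoc (1 - p) (1 - p), e3]
      rw [this, spectrum.nonzero_mul_comm]
      apply hext
      · exact (FR.rank_mul_right _ _).trans_lt ((FR.rank_mul_left _ _).trans_lt ha)
      · simp only [← mul_assoc, e1, zero_mul]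
      · simp only [mul_assoc, e2, mul_zero]
    have hr : a * (1 - p) = 0 := by
      by_contra hne
      obtain ⟨x, hx⟩ := FR.exists_ne_of_ss hss hne
      apply hx
      have : x * (a * (1 - p)) = (x * (a * (1 - p))) * (1 - p) := by
        simp only [mul_assoc, e3]
      rw [this, spectrum.nonzero_mul_comm]
      apply hext
      · exact (FR.rank_mul_left _ _).trans_lt ((FR.rank_mul_left _ _).trans_lt
          ((FR.rank_mul_right _ _).trans_lt ha))
      · rw [← mul_assoc, e1]; simp
      · simp only [mul_assoc, e2, mul_zero]
    refine ⟨a, ?_⟩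
    rw [sub_mul, one_mul, sub_eq_zero] at hl
    rw [mul_sub, mul_one, sub_eq_zero] at hr
    rw [← hl, ← hr]
  · rintro _ ⟨x, rfl⟩
    exact (FR.rank_mul_left _ _).trans_lt hrank
end

section
/- Let A be a semisimple unital complex Banach algebra, let p ∈ A be a rank-one projection (an idempotent with rank(p) = 1), and let x ∈ A be arbitrary. Then the element q = p + p·x − p·x·p is a nonzero idempotent with rank(q) = 1. -/
open scoped ENNReal

theorem spectralRank_mul_right_le {A : Type*} [Ring A] [Algebra ℂ A] (a u : A) :
    spectralRank (a * u) ≤ spectralRank a := by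
  unfold spectralRank
  refine iSup_le fun y => ?_
  have h : spectrum ℂ (y * (a * u)) \ {0} = spectrum ℂ (u * y * a) \ {0} := by
    rw [← mul_assoc, spectrum.nonzero_mul_comm, mul_assoc]
  rw [h]
  exact le_iSup (fun x : A => (spectrum ℂ (x * a) \ {0}).encard) (u * y)

theorem stmt8 {A : Type*} [NormedRing A] [NormedAlgebra ℂ A] [CompleteSpace A]
    (hss : ∀ a : A, (∀ x : A, spectralRadius ℂ (x * a) = 0) → a = 0)
    (p x : A) (hp : p * p = p) (hrank : spectralRank p = 1) :
    p + p * x - p * x * p ≠ 0 ∧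
    (p + p * x - p * x * p) * (p + p * x - p * x * p) = p + p * x - p * x * p ∧
    spectralRank (p + p * x - p * x * p) = 1 := by
  have hq : p + p * x - p * x * p = p * (1 + x - x * p) := by noncomm_ring
  have hqp : (p + p * x - p * x * p) * p = p := by
    rw [sub_mul, add_mul, mul_assoc (p * x) p p, hp, add_sub_cancel_right]
  refine ⟨fun h0 => ?_, ?_, le_antisymm ?_ ?_⟩
  · rw [h0, zero_mul] at hqp
    have hz : spectralRank (0 : A) = 0 := by
      unfold spectralRank
      simp only [mul_zero, ENat.iSup_eq_zero, Set.encard_eq_zero]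
      intro _
      rw [Set.diff_eq_empty]
      intro k hk
      by_contra hne
      have hk0 : k ≠ 0 := hne
      rw [spectrum.mem_iff, sub_zero] at hk
      exact hk ((IsUnit.mk0 k hk0).map (algebraMap ℂ A))
    rw [← hqp, hz] at hrank
    exact zero_ne_one hrank
  · conv_lhs => rw [show (p + p * x - p * x * p) * (p + p * x - p * x * p)
      = (p + p * x - p * x * p) * p * (1 + x - x * p) by rw [mul_assoc _ p, ← hq]]
    rw [hqp, hq]
  · rw [hq, ← hrank]
    exact spectralRank_mul_right_le _ _
  · rw [← hrank]
    conv_lhs => rw [← hqp]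
    exact spectralRank_mul_right_le _ _
end

section
/- Let A be a semisimple unital complex Banach algebra. Then there exists a set P of projections of A, each of rank at most 1, such that: (i) for distinct p, q ∈ P the two-sided ideals J_p and J_q are orthogonal, i.e. u·v = 0 and v·u = 0 for all u ∈ J_p and v ∈ J_q; and (ii) every finite-rank element of A can be written as a finite sum of elements each of which belongs to J_p for some p ∈ P. -/
open scoped ENNReal

/-- The two-sided ideal generated by `p`: all finite sums `∑ xⱼ·p·yⱼ`. -/
def idealGen {A : Type*} [Ring A] (p : A) : Set A :=
  {a : A | ∃ (n : ℕ) (x y : Fin n → A), a = ∑ j, x j * p * y j}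


section helpers

variable {A : Type*} [NormedRing A] [NormedAlgebra ℂ A] [CompleteSpace A]

open Filter Topology Polynomial


theorem qn_bound {c : A} (hc : ∀ l ∈ spectrum ℂ c, l = 0) {ε : ℝ} (hε : 0 < ε) :
    ∀ᶠ n : ℕ in atTop, ‖c ^ n‖ ≤ ε ^ n := by
  have hr : spectralRadius ℂ c = 0 := by
    unfold spectralRadius
    simp only [ENNReal.iSup_eq_zero]
    intro l hl
    simp [hc l hl]
  have h := spectrum.pow_norm_pow_one_div_tendsto_nhds_spectralRadius c
  rw [hr] at h
  have h2 := h.eventually (gt_mem_nhds (show (0 : ENNReal) < ENNReal.ofReal ε by simpa using hε))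
  filter_upwards [h2, eventually_ge_atTop 1] with n hn hn1
  have h3 : ‖c ^ n‖ ^ (1 / n : ℝ) < ε := (ENNReal.ofReal_lt_ofReal_iff hε).1 hn
  have hn0 : (n : ℝ) ≠ 0 := by positivity
  calc ‖c ^ n‖ = (‖c ^ n‖ ^ (1 / n : ℝ)) ^ n := by
        rw [← Real.rpow_natCast, ← Real.rpow_mul (norm_nonneg _)]
        field_simp
        simp
    _ ≤ ε ^ n := by
        apply pow_le_pow_left₀ (by positivity) h3.le

theorem qn_mul {c t : A} (hc : ∀ l ∈ spectrum ℂ c, l = 0) (hct : Commute c t) :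
    ∀ l ∈ spectrum ℂ (c * t), l = 0 := by
  intro l hl
  by_contra hl0
  have hlp : 0 < ‖l‖ := norm_pos_iff.2 hl0
  set ε : ℝ := ‖l‖ / (2 * (‖t‖ + 1)) with hεd
  have hε : 0 < ε := by positivity
  have hb := qn_bound hc hε
  have key : ∀ᶠ n : ℕ in atTop, (1 : ℝ) ≤ (1 / 2) ^ n * ‖(1 : A)‖ := by
    filter_upwards [hb, eventually_ge_atTop 1] with n hn hn1
    have h1 := spectrum.norm_le_norm_mul_of_mem (spectrum.pow_mem_pow (c * t) n hl)
    rw [norm_pow, hct.mul_pow] at h1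
    have h2 : ‖c ^ n * t ^ n‖ ≤ ε ^ n * (‖t‖ + 1) ^ n := by
      refine (norm_mul_le _ _).trans ?_
      gcongr
      refine (norm_pow_le' t hn1).trans ?_
      gcongr
      linarith
    have h3 : ε * (‖t‖ + 1) = ‖l‖ * (1 / 2) := by
      rw [hεd]; field_simp
    rw [← mul_pow, h3, mul_pow] at h2
    have h4 : ‖l‖ ^ n * 1 ≤ ‖l‖ ^ n * ((1 / 2) ^ n * ‖(1 : A)‖) := by
      calc ‖l‖ ^ n * 1 ≤ ‖c ^ n * t ^ n‖ * ‖(1 : A)‖ := by simpa using h1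
        _ ≤ (‖l‖ ^ n * (1 / 2) ^ n) * ‖(1 : A)‖ := by gcongr
        _ = _ := by ring
    exact le_of_mul_le_mul_left h4 (by positivity)
  have ht : Tendsto (fun n : ℕ => (1 / 2 : ℝ) ^ n * ‖(1 : A)‖) atTop (𝓝 (0 * ‖(1 : A)‖)) :=
    (tendsto_pow_atTop_nhds_zero_of_lt_one (by norm_num) (by norm_num)).mul_const _
  rw [zero_mul] at ht
  have := ge_of_tendsto ht key
  linarith

theorem qn_catalan {d : A} (hd : ∀ l ∈ spectrum ℂ d, l = 0) :
    ∃ S : A, S = 1 + d * (S * S) ∧ ∀ z, Commute z d → Commute z S := by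
  set f : ℕ → A := fun n => catalan n • d ^ n with hf
  have hsum : Summable fun n => ‖f n‖ := by
    have hg : Summable fun n : ℕ => ((1 : ℝ) / 2) ^ n := summable_geometric_two
    refine summable_of_isBigO_nat hg ?_
    refine Asymptotics.IsBigO.of_bound 1 ?_
    filter_upwards [qn_bound hd (show (0 : ℝ) < 1 / 8 by norm_num)] with n hn
    have h1 : ‖f n‖ ≤ 4 ^ n * (1 / 8) ^ n := by
      refine (norm_nsmul_le (n := catalan n) (a := d ^ n)).trans ?_
      gcongr
      have : catalan n ≤ 4 ^ n := by
        rw [catalan_eq_centralBinom_div]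
        exact (Nat.div_le_self _ _).trans (Nat.centralBinom_le_four_pow n)
      exact_mod_cast this
    rw [← mul_pow] at h1
    norm_num at h1 ⊢
    exact h1
  have hs : Summable f := hsum.of_norm
  refine ⟨∑' n, f n, ?_, ?_⟩
  · rw [tsum_mul_tsum_eq_tsum_sum_antidiagonal_of_summable_norm hsum hsum]
    have h2 : Summable fun n => ∑ kl ∈ Finset.HasAntidiagonal.antidiagonal n, f kl.1 * f kl.2 :=
      (summable_norm_sum_mul_antidiagonal_of_summable_norm hsum hsum).of_norm
    rw [← h2.tsum_mul_left, hs.tsum_eq_zero_add]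
    congr 1
    · simp [hf]
    · congr 1
      ext n
      simp only [hf]
      rw [catalan_succ', Finset.sum_smul, Finset.mul_sum]
      refine Finset.sum_congr rfl fun kl hkl => ?_
      rw [Finset.HasAntidiagonal.mem_antidiagonal] at hkl
      rw [smul_mul_smul_comm, ← pow_add, hkl, mul_smul_comm, pow_succ']
  · intro z hz
    exact Commute.tsum_right _ fun n => (hz.pow_right n).smul_right _

theorem idem_comm_ring {R : Type*} [CommRing R] (u S w : R)
    (hS : S = 1 + -(u * u - u) * (S * S)) (hw : w * (1 + 4 * (u * u - u)) = 1) :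
    (u + (u * u - u) * ((1 - 2 * u) * (2 - S) * w)) * (u + (u * u - u) * ((1 - 2 * u) * (2 - S) * w))
      = u + (u * u - u) * ((1 - 2 * u) * (2 - S) * w) := by
  set c := u * u - u with hc
  have hy : (c * (2 - S) * w) * (c * (2 - S) * w) - c * (2 - S) * w = - c * w := by
    have h1 : w = w * w * (1 + 4 * c) := by linear_combination (-w) * hw
    linear_combination (c * (2 - S) - c) * h1 * (-1) * (-1) * (-1) + w * w * c * hS
  have h2 : (1 - 2 * u) * (1 - 2 * u) = 1 + 4 * c := by rw [hc]; ring
  linear_combination (1 + 4 * c) * hy - c * hw + h2 * ((c * (2 - S) * w) * (c * (2 - S) * w) - c * (2 - S) * w)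

theorem idem_lift {u : A} (hc : ∀ l ∈ spectrum ℂ (u * u - u), l = 0) :
    ∃ t : A, (∀ z, Commute z u → Commute z t) ∧
      (u + (u * u - u) * t) * (u + (u * u - u) * t) = u + (u * u - u) * t := by
  have hd : ∀ l ∈ spectrum ℂ (-(u * u - u)), l = 0 := by
    have := qn_mul (t := -1) hc (Commute.neg_one_right _)
    simpa using this
  obtain ⟨S, hS, hSc⟩ := qn_catalan hd
  have hcomm : ∀ z, Commute z u → Commute z (u * u - u) := fun z hz =>
    (hz.mul_right hz).sub_right hz
  have hU : IsUnit (1 + 4 * (u * u - u)) := by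
    by_contra h
    have : (-1 : ℂ) ∈ spectrum ℂ ((u * u - u) * 4) := by
      rw [spectrum.mem_iff]
      intro h'
      apply h
      have h'' := h'.neg
      have e : -((algebraMap ℂ A) (-1) - (u * u - u) * 4) = 1 + 4 * (u * u - u) := by
        simp only [map_neg, map_one]; noncomm_ring
      rwa [e] at h''
    have h0 := qn_mul (t := 4) hc (Nat.cast_commute 4 _).symm _ this
    norm_num at h0
  obtain ⟨U, hU⟩ := hU
  set w : A := ↑U⁻¹ with hw
  have hw1 : w * (1 + 4 * (u * u - u)) = 1 := by rw [← hU]; simp [hw]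
  have hzS : ∀ z, Commute z u → Commute z S := fun z hz => hSc z (hcomm z hz).neg_right
  have hzw : ∀ z, Commute z u → Commute z w := fun z hz => by
    apply Commute.units_inv_right
    rw [hU]
    exact (Commute.one_right _).add_right ((Nat.cast_commute 4 z).symm.mul_right (hcomm z hz))
  refine ⟨(1 - 2 * u) * (2 - S) * w, ?_, ?_⟩
  · intro z hz
    have h2 : Commute z 2 := (Nat.cast_commute 2 z).symm
    exact ((((Commute.one_right z).sub_right (h2.mul_right hz)).mul_right
      (h2.sub_right (hzS z hz))).mul_right (hzw z hz))
  · have huS : Commute u S := hzS u rfl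
    have huw : Commute u w := hzw u rfl
    have hSw : Commute S w := (hzw S huS.symm)
    have hs : ∀ x ∈ ({u, S, w} : Set A), ∀ y ∈ ({u, S, w} : Set A), x * y = y * x := by
      rintro x (rfl | rfl | rfl) y (rfl | rfl | rfl)
      all_goals first | rfl | exact huS.eq | exact huS.symm.eq | exact huw.eq | exact huw.symm.eq | exact hSw.eq | exact hSw.symm.eq
    have hmc := Subring.isMulCommutative_closure hs
    let _ : CommRing (Subring.closure ({u, S, w} : Set A)) :=
      { (inferInstance : Ring (Subring.closure ({u, S, w} : Set A))) with
        mul_comm := fun x y => hmc.is_comm.comm x y }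
    have hsub := Subring.subset_closure (s := ({u, S, w} : Set A))
    have := idem_comm_ring (R := Subring.closure ({u, S, w} : Set A))
      ⟨u, hsub (by simp)⟩ ⟨S, hsub (by simp)⟩ ⟨w, hsub (by simp)⟩
      (Subtype.ext hS) (Subtype.ext hw1)
    exact congrArg Subtype.val this

theorem spec_idem {b : A} (hfin : (spectrum ℂ b).Finite) {l : ℂ} (hl : l ∈ spectrum ℂ b)
    (hl0 : l ≠ 0) : ∃ e v : A, e * e = e ∧ e = v * b ∧ e = b * v ∧ e ≠ 0 ∧
      ∀ m ∈ spectrum ℂ b, m ≠ 0 → m ≠ l → e * b ≠ b := by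
  classical
  set s : Finset ℂ := hfin.toFinset with hs
  have hms : ∀ x, x ∈ s ↔ x ∈ spectrum ℂ b := fun x => by simp [hs]
  set B : ℂ[X] := C l⁻¹ * Lagrange.basis s id l with hB
  set h0 : ℂ[X] := X * B with hh0
  have ev1 : eval l h0 = 1 := by
    have := Lagrange.eval_basis_self (s := s) (v := id) Function.injective_id.injOn ((hms l).2 hl)
    simp only [id] at this
    simp [hh0, hB, this, hl0]
  have ev0 : ∀ m ∈ spectrum ℂ b, m ≠ l → eval m h0 = 0 := by
    intro m hm hml
    have := Lagrange.eval_basis_of_ne (s := s) (v := id) hml.symm ((hms m).2 hm)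
    simp only [id] at this
    simp [hh0, hB, this]
  set u : A := aeval b h0 with hu
  set k : A := aeval b B with hk
  have huk : u = b * k := by simp [hu, hh0, hk]
  have hcp : u * u - u = aeval b (h0 * h0 - h0) := by simp [hu]
  have hc : ∀ x ∈ spectrum ℂ (u * u - u), x = 0 := by
    rw [hcp, spectrum.map_polynomial_aeval_of_nonempty _ _ ⟨l, hl⟩]
    rintro _ ⟨m, hm, rfl⟩
    by_cases hml : m = l
    · subst hml; simp [ev1]
    · simp [ev0 m hm hml]
  obtain ⟨t, htc, hid⟩ := idem_lift hc
  have hbk : Commute b k := by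
    have : (X : ℂ[X]) * B = B * X := mul_comm _ _
    have := congrArg (aeval b) this
    simpa [Commute, SemiconjBy, hk] using this
  have hbu : Commute b u := by rw [huk]; exact (Commute.refl b).mul_right hbk
  have hbt : Commute b t := htc b hbu
  have hut : Commute u t := htc u rfl
  have hct : ∀ z, Commute u z → Commute (u * u - u) z := fun z hz =>
    (hz.mul_left hz).sub_left hz
  have hbv : Commute b (k + k * (u - 1) * t) :=
    hbk.add_right ((hbk.mul_right (hbu.sub_right (Commute.one_right b))).mul_right hbt)
  have hev : u + (u * u - u) * t = b * (k + k * (u - 1) * t) := by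
    have : u * u - u = b * k * (u - 1) := by rw [← huk]; noncomm_ring
    rw [this]
    nth_rewrite 1 [huk]
    noncomm_ring
  refine ⟨u + (u * u - u) * t, k + k * (u - 1) * t, hid, by rw [hev, hbv.eq], hev, ?_, ?_⟩
  · intro h
    have h1 : u = (u * u - u) * (-t) := by
      rw [mul_neg]; exact eq_neg_of_add_eq_zero_left h
    have h2 := qn_mul (t := -t) hc (hct _ hut.neg_right)
    rw [← h1] at h2
    have h3 : (1 : ℂ) ∈ spectrum ℂ u := spectrum.subset_polynomial_aeval b h0 ⟨l, hl, ev1⟩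
    exact one_ne_zero (h2 1 h3)
  · intro m hm hm0 hml h
    have h1 : b - u * b = (u * u - u) * (t * b) := by
      rw [add_mul, mul_assoc] at h
      exact sub_eq_of_eq_add' h.symm
    have h2 := qn_mul (t := t * b) hc (hct _ (hut.mul_right hbu.symm))
    rw [← h1] at h2
    have h3 : m ∈ spectrum ℂ (b - u * b) := by
      have : b - u * b = aeval b (X - h0 * X) := by simp [hu]
      rw [this]
      exact spectrum.subset_polynomial_aeval b _ ⟨m, hm, by simp [ev0 m hm hml]⟩
    exact hm0 (h2 m h3)

theorem finite_spec {a : A} (ha : spectralRank a < ⊤) (x : A) : (spectrum ℂ (x * a)).Finite := by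
  have h1 : ((spectrum ℂ (x * a)) \ {0}).encard < ⊤ :=
    lt_of_le_of_lt (le_iSup (fun x : A => ((spectrum ℂ (x * a)) \ {0}).encard) x) ha
  have h2 := Set.encard_lt_top_iff.1 h1
  exact (h2.union (Set.finite_singleton 0)).subset (by simp)

theorem exists_spec (hss : ∀ a : A, (∀ x : A, spectralRadius ℂ (x * a) = 0) → a = 0)
    {a : A} (ha : a ≠ 0) : ∃ x : A, ∃ l ∈ spectrum ℂ (x * a), l ≠ 0 := by
  by_contra! h
  apply ha
  apply hss
  intro x
  unfold spectralRadius
  simp only [ENNReal.iSup_eq_zero]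
  intro l hl
  simp [h x l hl]

theorem spec_comm {x y : A} {l : ℂ} (hl : l ∈ spectrum ℂ (x * y)) (hl0 : l ≠ 0) :
    l ∈ spectrum ℂ (y * x) :=
  (spectrum.unit_mem_mul_comm (r := Units.mk0 l hl0)).1 hl

/-- Finite families of nonzero orthogonal idempotents in `A * a`. -/
def OrthFam (a : A) (T : Finset A) : Prop :=
  (∀ p ∈ T, p * p = p ∧ p ≠ 0 ∧ ∃ x, p = x * a) ∧ ∀ p ∈ T, ∀ q ∈ T, p ≠ q → p * q = 0

theorem orthFam_card {a : A} {T : Finset A} (hT : OrthFam a T) :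
    (T.card : ℕ∞) ≤ spectralRank a := by
  classical
  obtain ⟨f, hf⟩ := Set.countable_iff_exists_injOn.1 T.countable_toSet
  have hx : ∀ p : A, ∃ x, p ∈ T → p = x * a := fun p => by
    by_cases hp : p ∈ T
    · obtain ⟨x, hx⟩ := (hT.1 p hp).2.2
      exact ⟨x, fun _ => hx⟩
    · exact ⟨0, fun h => absurd h hp⟩
  choose x hx using hx
  set c : A → ℂ := fun p => (f p : ℂ) + 1 with hc
  have hc0 : ∀ p, c p ≠ 0 := fun p => by simp only [hc]; exact Nat.cast_add_one_ne_zero _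
  have hci : Set.InjOn c T := by
    intro p hp q hq h
    apply hf hp hq
    simp only [hc] at h
    exact_mod_cast add_right_cancel h
  set X : A := ∑ p ∈ T, c p • x p
  have hX : X * a = ∑ p ∈ T, c p • p := by
    rw [Finset.sum_mul]
    refine Finset.sum_congr rfl fun p hp => ?_
    rw [smul_mul_assoc, ← hx p hp]
  have hsub : c '' (T : Set A) ⊆ (spectrum ℂ (X * a)) \ {0} := by
    rintro _ ⟨p, hp, rfl⟩
    refine ⟨?_, hc0 p⟩
    rw [spectrum.mem_iff]
    intro hu
    have h1 : (algebraMap ℂ A (c p) - X * a) * p = 0 := by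
      rw [sub_mul, hX, Finset.sum_mul, Finset.sum_eq_single p]
      · rw [smul_mul_assoc, (hT.1 p hp).1, ← Algebra.smul_def, sub_self]
      · intro q hq hqp
        rw [smul_mul_assoc, hT.2 q hq p hp hqp, smul_zero]
      · intro h; exact absurd hp h
    exact (hT.1 p hp).2.1 (hu.mul_right_eq_zero.1 h1)
  calc (T.card : ℕ∞) = (T : Set A).encard := (Set.encard_coe_eq_coe_finsetCard T).symm
    _ = (c '' (T : Set A)).encard := (hci.encard_image).symm
    _ ≤ ((spectrum ℂ (X * a)) \ {0}).encard := Set.encard_le_encard hsub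
    _ ≤ spectralRank a := le_iSup (fun x : A => ((spectrum ℂ (x * a)) \ {0}).encard) X

/-- Minimal idempotents. -/
def MinIdem (p : A) : Prop :=
  p * p = p ∧ p ≠ 0 ∧ spectralRank p ≤ 1 ∧
    ∀ f : A, f * f = f → p * f = f → f * p = f → f = 0 ∨ f = p

theorem exists_decomp (hss : ∀ a : A, (∀ x : A, spectralRadius ℂ (x * a) = 0) → a = 0)
    {a : A} (ha : spectralRank a < ⊤) :
    ∃ T : Finset A, (∀ p ∈ T, MinIdem p) ∧ a = ∑ p ∈ T, a * p := by
  classical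
  obtain ⟨n, hn⟩ := ENat.ne_top_iff_exists.1 ha.ne
  have hbd : ∀ k : ℕ, (∃ T, OrthFam a T ∧ T.card = k) → k ≤ n := by
    rintro k ⟨T, hT, rfl⟩
    have := orthFam_card hT
    rw [← hn] at this
    exact_mod_cast this
  have hex : ∃ T, OrthFam a T ∧ ∀ T', OrthFam a T' → T'.card ≤ T.card := by
    have h0 : ∃ k, ∃ T, OrthFam a T ∧ T.card = k := ⟨0, ∅, by simp [OrthFam], rfl⟩
    have hb : BddAbove {k | ∃ T, OrthFam a T ∧ T.card = k} := ⟨n, fun k hk => hbd k hk⟩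
    obtain ⟨T, hT, hk⟩ := Nat.sSup_mem (s := {k | ∃ T, OrthFam a T ∧ T.card = k}) h0 hb
    refine ⟨T, hT, fun T' hT' => ?_⟩
    rw [hk]
    exact le_csSup hb ⟨T', hT', rfl⟩
  obtain ⟨T, hT, hmax⟩ := hex
  refine ⟨T, ?_, ?_⟩
  · intro p hp
    obtain ⟨hpp, hp0, x, hx⟩ := hT.1 p hp
    have hmin : ∀ f : A, f * f = f → p * f = f → f * p = f → f = 0 ∨ f = p := by
      intro f hff hpf hfp
      by_contra! hcon
      obtain ⟨hf0, hfp'⟩ := hcon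
      have hfq : ∀ q ∈ T, q ≠ p → f * q = 0 ∧ q * f = 0 := by
        intro q hq hqp
        constructor
        · rw [← hfp, mul_assoc, hT.2 p hp q hq hqp.symm, mul_zero]
        · rw [← hpf, ← mul_assoc, hT.2 q hq p hp hqp, zero_mul]
      have hg0 : p - f ≠ 0 := sub_ne_zero.2 (Ne.symm hfp')
      have hgg : (p - f) * (p - f) = p - f := by
        rw [sub_mul, mul_sub, mul_sub, hpp, hpf, hfp, hff]; abel
      have hfg : f * (p - f) = 0 := by rw [mul_sub, hfp, hff, sub_self]
      have hgf : (p - f) * f = 0 := by rw [sub_mul, hpf, hff, sub_self]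
      have hgq : ∀ q ∈ T, q ≠ p → (p - f) * q = 0 ∧ q * (p - f) = 0 := by
        intro q hq hqp
        rw [sub_mul, mul_sub, (hfq q hq hqp).1, (hfq q hq hqp).2, hT.2 p hp q hq hqp.symm,
          hT.2 q hq p hp hqp]
        simp
      have hg1 : p - f ∉ T.erase p := by
        intro h
        obtain ⟨h1, h2⟩ := Finset.mem_erase.1 h
        exact hg0 (by rw [← hgg]; exact (hgq _ h2 h1).1)
      have hf1 : f ∉ insert (p - f) (T.erase p) := by
        intro h
        rcases Finset.mem_insert.1 h with h | h
        · apply hf0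
          rw [← hff]
          nth_rewrite 2 [h]
          exact hfg
        · obtain ⟨h1, h2⟩ := Finset.mem_erase.1 h
          exact hf0 (by rw [← hff]; exact (hfq _ h2 h1).1)
      have hfam : OrthFam a (insert f (insert (p - f) (T.erase p))) := by
        constructor
        · intro q hq
          simp only [Finset.mem_insert, Finset.mem_erase] at hq
          rcases hq with rfl | rfl | ⟨h1, h2⟩
          · exact ⟨hff, hf0, q * x, by rw [mul_assoc, ← hx, hfp]⟩
          · exact ⟨hgg, hg0, (p - f) * x, by rw [mul_assoc, ← hx, sub_mul, hpp, hfp]⟩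
          · exact hT.1 q h2
        · intro q hq r hr hqr
          simp only [Finset.mem_insert, Finset.mem_erase] at hq hr
          rcases hq with rfl | rfl | ⟨h1, h2⟩ <;> rcases hr with rfl | rfl | ⟨h3, h4⟩
          · exact absurd rfl hqr
          · exact hfg
          · exact (hfq _ h4 h3).1
          · exact hgf
          · exact absurd rfl hqr
          · exact (hgq _ h4 h3).1
          · exact (hfq _ h2 h1).2
          · exact (hgq _ h2 h1).2
          · exact hT.2 q h2 r h4 hqr
      have hcard := hmax _ hfam
      rw [Finset.card_insert_of_notMem hf1, Finset.card_insert_of_notMem hg1,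
        Finset.card_erase_of_mem hp] at hcard
      have : 0 < T.card := Finset.card_pos.2 ⟨p, hp⟩
      omega
    refine ⟨hpp, hp0, ?_, hmin⟩
    refine iSup_le fun y => ?_
    rw [Set.encard_le_one_iff]
    rintro l m ⟨hl, hl0⟩ ⟨hm, hm0⟩
    by_contra hlm
    have e1 : y * p = y * p * p := by rw [mul_assoc, hpp]
    rw [e1] at hl hm
    have hl' := spec_comm hl hl0
    have hm' := spec_comm hm hm0
    have hfin : (spectrum ℂ (p * (y * p))).Finite := by
      have : p * (y * p) = (p * y * x) * a := by rw [mul_assoc _ x a, ← hx, mul_assoc]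
      rw [this]
      exact finite_spec ha _
    obtain ⟨e, v, hee, hev, hev', he0, hne⟩ := spec_idem hfin hl' hl0
    have hpe : p * e = e := by rw [hev', ← mul_assoc, ← mul_assoc p p, hpp]
    have hep : e * p = e := by rw [hev]; simp only [mul_assoc, hpp]
    rcases hmin e hee hpe hep with h | h
    · exact he0 h
    · apply hne m hm' hm0 (Ne.symm hlm)
      rw [h, ← mul_assoc, hpp]
  · by_contra hne
    rw [← Finset.mul_sum] at hne
    set e : A := ∑ p ∈ T, p with he
    have hqe : ∀ q ∈ T, e * q = q ∧ q * e = q := by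
      intro q hq
      constructor
      · rw [he, Finset.sum_mul, Finset.sum_eq_single q (fun r hr h => hT.2 r hr q hq h)
          (fun h => absurd hq h), (hT.1 q hq).1]
      · rw [he, Finset.mul_sum, Finset.sum_eq_single q (fun r hr h => hT.2 q hq r hr h.symm)
          (fun h => absurd hq h), (hT.1 q hq).1]
    have hee : e * e = e := by
      nth_rewrite 2 [he]
      rw [Finset.mul_sum, Finset.sum_congr rfl fun q hq => (hqe q hq).1]
    have hez : ∃ z, e = z * a := by
      have : ∀ p ∈ T, ∃ z, p = z * a := fun p hp => (hT.1 p hp).2.2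
      choose! z hz using this
      exact ⟨∑ p ∈ T, z p, by rw [Finset.sum_mul, he]; exact Finset.sum_congr rfl hz⟩
    obtain ⟨z, hz⟩ := hez
    have ha' : a - a * e ≠ 0 := sub_ne_zero.2 hne
    obtain ⟨y, l, hl, hl0⟩ := exists_spec hss ha'
    have hw : y * (a - a * e) = (y - y * a * z) * a := by
      rw [hz]; noncomm_ring
    have hfin : (spectrum ℂ (y * (a - a * e))).Finite := by
      rw [hw]; exact finite_spec ha _
    obtain ⟨g, v, hgg, hgv, -, hg0, -⟩ := spec_idem hfin hl hl0
    have hge : g * e = 0 := by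
      rw [hgv, mul_assoc, mul_assoc, sub_mul, mul_assoc a e e, hee, sub_self, mul_zero, mul_zero]
    set h : A := g - e * g with hh
    have hhe : h * e = 0 := by rw [hh, sub_mul, mul_assoc, hge, mul_zero, sub_zero]
    have heh : e * h = 0 := by rw [hh, mul_sub, ← mul_assoc, hee, sub_self]
    have hgh : g * h = g := by rw [hh, mul_sub, ← mul_assoc, hge, zero_mul, sub_zero, hgg]
    have hh2 : h * h = h := by
      nth_rewrite 1 [hh]
      rw [sub_mul, mul_assoc, hgh]
    have hh0 : h ≠ 0 := by
      intro h0
      rw [h0, mul_zero] at hgh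
      exact hg0 hgh.symm
    have hhq : ∀ q ∈ T, h * q = 0 ∧ q * h = 0 := by
      intro q hq
      constructor
      · rw [← (hqe q hq).1, ← mul_assoc, hhe, zero_mul]
      · rw [← (hqe q hq).2, mul_assoc, heh, mul_zero]
    have hhT : h ∉ T := fun hm => hh0 (by rw [← hh2]; exact (hhq h hm).1)
    have hfam : OrthFam a (insert h T) := by
      constructor
      · intro q hq
        rcases Finset.mem_insert.1 hq with rfl | hq
        · refine ⟨hh2, hh0, (1 - e) * v * (y - y * a * z), ?_⟩
          rw [mul_assoc, ← hw, mul_assoc, ← hgv, sub_mul, one_mul]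
        · exact hT.1 q hq
      · intro q hq r hr hqr
        rcases Finset.mem_insert.1 hq with h1 | h1 <;> rcases Finset.mem_insert.1 hr with h2 | h2
        · exact absurd (h1.trans h2.symm) hqr
        · rw [h1]; exact (hhq r h2).1
        · rw [h2]; exact (hhq q h1).2
        · exact hT.2 q h1 r h2 hqr
    have := hmax _ hfam
    rw [Finset.card_insert_of_notMem hhT] at this
    omega

theorem minIdem_gen (hss : ∀ a : A, (∀ x : A, spectralRadius ℂ (x * a) = 0) → a = 0)
    {p b : A} (hp : MinIdem p) (hb : b ≠ 0) (hbp : b * p = b) : ∃ x, p = x * b := by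
  obtain ⟨hpp, hp0, hr, hmin⟩ := hp
  obtain ⟨z, l, hl, hl0⟩ := exists_spec hss hb
  have e1 : z * b = z * b * p := by rw [mul_assoc, hbp]
  rw [e1] at hl
  have hl' := spec_comm hl hl0
  have hfin : (spectrum ℂ (p * (z * b))).Finite := by
    have : p * (z * b) = p * (z * b) * p := by simp only [mul_assoc, hbp]
    rw [this]
    exact finite_spec (lt_of_le_of_lt hr (by simp)) _
  obtain ⟨e, v, hee, hev, hev', he0, -⟩ := spec_idem hfin hl' hl0
  have hpe : p * e = e := by rw [hev', ← mul_assoc, ← mul_assoc p p, hpp]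
  have hep : e * p = e := by rw [hev]; simp only [mul_assoc, hbp]
  rcases hmin e hee hpe hep with h | h
  · exact absurd h he0
  · exact ⟨v * p * z, (h.symm.trans hev).trans (by simp only [mul_assoc])⟩

theorem idealGen_subset {R : Type*} [Ring R] {p q y z : R} (h : q = y * p * z) :
    idealGen q ⊆ idealGen p := by
  rintro _ ⟨n, x, w, rfl⟩
  refine ⟨n, fun j => x j * y, fun j => z * w j, Finset.sum_congr rfl fun j _ => ?_⟩
  rw [h]; simp only [mul_assoc]

theorem minIdem_dichotomy (hss : ∀ a : A, (∀ x : A, spectralRadius ℂ (x * a) = 0) → a = 0)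
    {p q : A} (hp : MinIdem p) (hq : MinIdem q) (h : ∃ x, p * x * q ≠ 0) :
    idealGen p = idealGen q := by
  obtain ⟨x, hx⟩ := h
  obtain ⟨y, hy⟩ := minIdem_gen hss hq hx (by rw [mul_assoc, hq.1])
  have h2 : q * y * p ≠ 0 := by
    intro h0
    apply hq.2.1
    rw [← hq.1]
    nth_rewrite 2 [hy]
    rw [← mul_assoc, ← mul_assoc, ← mul_assoc, h0]; simp
  obtain ⟨z, hz⟩ := minIdem_gen hss hp h2 (by rw [mul_assoc, hp.1])
  apply Set.Subset.antisymm
  · exact idealGen_subset (y := z) (z := y * p) (by simpa only [mul_assoc] using hz)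
  · exact idealGen_subset (y := y) (z := x * q) (by simpa only [mul_assoc] using hy)

theorem idealGen_mul_zero {R : Type*} [Ring R] {p q u v : R} (h : ∀ x, p * x * q = 0)
    (hu : u ∈ idealGen p) (hv : v ∈ idealGen q) : u * v = 0 := by
  obtain ⟨n, x, y, rfl⟩ := hu
  obtain ⟨m, x', y', rfl⟩ := hv
  rw [Finset.sum_mul]
  refine Finset.sum_eq_zero fun i _ => ?_
  rw [Finset.mul_sum]
  refine Finset.sum_eq_zero fun j _ => ?_
  have : x i * p * y i * (x' j * q * y' j) = x i * (p * (y i * x' j) * q) * y' j := by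
    simp only [mul_assoc]
  rw [this, h]; simp

end helpers

theorem stmt9 {A : Type*} [NormedRing A] [NormedAlgebra ℂ A] [CompleteSpace A]
    (hss : ∀ a : A, (∀ x : A, spectralRadius ℂ (x * a) = 0) → a = 0) :
    ∃ P : Set A,
      (∀ p ∈ P, p * p = p ∧ spectralRank p ≤ 1) ∧
      (∀ p ∈ P, ∀ q ∈ P, p ≠ q →
        ∀ u ∈ idealGen p, ∀ v ∈ idealGen q, u * v = 0 ∧ v * u = 0) ∧
      (∀ a : A, spectralRank a < ⊤ →
        ∃ (m : ℕ) (g : Fin m → A),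
          (∀ j, ∃ p ∈ P, g j ∈ idealGen p) ∧ a = ∑ j, g j) := by
  classical
  have hch : ∀ J : Set A, ∃ r : A, (∃ q, MinIdem q ∧ idealGen q = J) → MinIdem r ∧ idealGen r = J := by
    intro J
    by_cases h : ∃ q, MinIdem q ∧ idealGen q = J
    · obtain ⟨q, hq⟩ := h
      exact ⟨q, fun _ => hq⟩
    · exact ⟨0, fun h' => absurd h' h⟩
  choose ch hch using hch
  have hch' : ∀ q, MinIdem q → MinIdem (ch (idealGen q)) ∧ idealGen (ch (idealGen q)) = idealGen q :=
    fun q hq => hch _ ⟨q, hq, rfl⟩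
  refine ⟨{p | ∃ q, MinIdem q ∧ p = ch (idealGen q)}, ?_, ?_, ?_⟩
  · rintro p ⟨q, hq, rfl⟩
    exact ⟨(hch' q hq).1.1, (hch' q hq).1.2.2.1⟩
  · rintro p ⟨p', hp', rfl⟩ q ⟨q', hq', rfl⟩ hne u hu v hv
    have hJ : idealGen (ch (idealGen p')) ≠ idealGen (ch (idealGen q')) := by
      intro h
      rw [(hch' p' hp').2, (hch' q' hq').2] at h
      exact hne (by rw [h])
    constructor
    · refine idealGen_mul_zero (fun x => ?_) hu hv
      by_contra h
      exact hJ (minIdem_dichotomy hss (hch' p' hp').1 (hch' q' hq').1 ⟨x, h⟩)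
    · refine idealGen_mul_zero (fun x => ?_) hv hu
      by_contra h
      exact hJ (minIdem_dichotomy hss (hch' q' hq').1 (hch' p' hp').1 ⟨x, h⟩).symm
  · intro a ha
    obtain ⟨T, hT, haT⟩ := exists_decomp hss ha
    refine ⟨T.card, fun j => a * (T.equivFin.symm j : A), fun j => ?_, ?_⟩
    · have hm := hT _ (T.equivFin.symm j).2
      refine ⟨_, ⟨_, hm, rfl⟩, ?_⟩
      rw [(hch' _ hm).2]
      exact ⟨1, fun _ => a, fun _ => 1, by simp⟩
    · rw [T.equivFin.symm.sum_comp (fun q : T => a * (q : A))]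
      conv_lhs => rw [haT]
      exact (Finset.sum_coe_sort T (fun q => a * q)).symm
end

section
/- Let A be a semisimple unital complex Banach algebra and let p, r ∈ A be minimal projections, i.e. nonzero idempotents such that for every x ∈ A there exist λ, μ ∈ ℂ with p·x·p = λ·p and r·x·r = μ·r. If p belongs to the two-sided ideal J_r generated by r, then r belongs to the two-sided ideal J_p generated by p; consequently J_r = J_p. -/
theorem idealGen_subset_aux {A : Type*} [Ring A] {a b u v : A} (h : a = u * b * v) :
    idealGen a ⊆ idealGen b := by
  rintro c ⟨n, x, y, rfl⟩
  refine ⟨n, fun j => x j * u, fun j => v * y j, ?_⟩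
  refine Finset.sum_congr rfl fun j _ => ?_
  rw [h]
  simp only [mul_assoc]

theorem stmt11 {A : Type*} [NormedRing A] [NormedAlgebra ℂ A] [CompleteSpace A]
    (hss : ∀ a : A, (∀ x : A, spectralRadius ℂ (x * a) = 0) → a = 0)
    (p r : A)
    (hp0 : p ≠ 0) (hp : p * p = p) (hpmin : ∀ x : A, ∃ lam : ℂ, p * x * p = lam • p)
    (hr0 : r ≠ 0) (hr : r * r = r) (hrmin : ∀ x : A, ∃ mu : ℂ, r * x * r = mu • r)
    (hmem : p ∈ idealGen r) :
    r ∈ idealGen p ∧ idealGen r = idealGen p := by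
  obtain ⟨n, x, y, hxy⟩ := hmem
  have hex : ∃ j, p * (x j * r * y j) * p ≠ 0 := by
    by_contra hcon
    push Not at hcon
    apply hp0
    have h1 : p = p * p * p := by rw [hp, hp]
    rw [h1]
    nth_rewrite 2 [hxy]
    rw [Finset.mul_sum, Finset.sum_mul]
    exact Finset.sum_eq_zero fun j _ => hcon j
  obtain ⟨j, hj⟩ := hex
  obtain ⟨l, hl⟩ := hpmin (x j * r * y j)
  obtain ⟨m, hm⟩ := hrmin (y j * p * x j)
  have hl0 : l ≠ 0 := by
    rintro rfl
    exact hj (by rw [hl, zero_smul])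
  have key : (p * (x j * r * y j) * p) * (p * (x j * r * y j) * p)
      = m • (p * (x j * r * y j) * p) := by
    calc (p * (x j * r * y j) * p) * (p * (x j * r * y j) * p)
        = p * x j * r * y j * (p * p) * x j * r * y j * p := by simp only [mul_assoc]
      _ = p * x j * (r * (y j * p * x j) * r) * y j * p := by
          rw [hp]; simp only [mul_assoc]
      _ = m • (p * (x j * r * y j) * p) := by
          rw [hm]; simp only [mul_smul_comm, smul_mul_assoc, mul_assoc]
  have hm0 : m ≠ 0 := by
    rintro rfl
    rw [hl, zero_smul, smul_mul_smul_comm, hp] at key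
    exact (smul_ne_zero (mul_ne_zero hl0 hl0) hp0) key
  have hrp : r = (m⁻¹ • (r * y j)) * p * (x j * r) := by
    have : m⁻¹ • (r * (y j * p * x j) * r) = r := by
      rw [hm, smul_smul, inv_mul_cancel₀ hm0, one_smul]
    simpa only [smul_mul_assoc, mul_assoc] using this.symm
  have hpr : p = (l⁻¹ • (p * x j)) * r * (y j * p) := by
    have : l⁻¹ • (p * (x j * r * y j) * p) = p := by
      rw [hl, smul_smul, inv_mul_cancel₀ hl0, one_smul]
    simpa only [smul_mul_assoc, mul_assoc] using this.symm
  refine ⟨idealGen_subset_aux hrp ⟨1, fun _ => 1, fun _ => 1, by simp⟩, ?_⟩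
  exact Set.Subset.antisymm (idealGen_subset_aux hrp) (idealGen_subset_aux hpr)
end

section
/- Let A be a semisimple unital complex Banach algebra and let S denote the set of finite-rank elements of A (= Soc A). Suppose S equals the two-sided ideal J_p generated by some minimal projection p (a nonzero idempotent with p·A·p = ℂ·p). Then S is a minimal two-sided ideal of A: every two-sided ideal I of A with {0} ≠ I ⊆ S satisfies I = S. -/
open scoped ENNReal

theorem stmt12 {A : Type*} [NormedRing A] [NormedAlgebra ℂ A] [CompleteSpace A]
    (hss : ∀ a : A, (∀ x : A, spectralRadius ℂ (x * a) = 0) → a = 0)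
    (p : A) (hp0 : p ≠ 0) (hp : p * p = p)
    (hpmin : ∀ x : A, ∃ lam : ℂ, p * x * p = lam • p)
    (hS : {a : A | spectralRank a < ⊤} = idealGen p) :
    ∀ I : Submodule ℂ A, (∀ a ∈ I, ∀ x : A, x * a ∈ I ∧ a * x ∈ I) →
      I ≠ ⊥ → (I : Set A) ⊆ {a : A | spectralRank a < ⊤} →
      (I : Set A) = {a : A | spectralRank a < ⊤} := by
  intro I hI hI0 hIS
  obtain ⟨b, hbI, hb0⟩ := (Submodule.ne_bot_iff I).1 hI0
  haveI : Nontrivial A := ⟨⟨p, 0, hp0⟩⟩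
  have key : ∃ x y : A, p * (x * b * y) * p ≠ 0 := by
    by_contra hcon
    push Not at hcon
    apply hb0
    apply hss
    intro x
    have hmem : x * b ∈ idealGen p := by
      rw [← hS]; exact hIS (hI b hbI x).1
    obtain ⟨n, u, v, huv⟩ := hmem
    have hcube : (x * b) ^ 3 = 0 := by
      have e1 : (x * b) ^ 3 = (∑ j, u j * p * v j) * (x * b) * (∑ j, u j * p * v j) := by
        rw [← huv]; noncomm_ring
      rw [e1, Finset.sum_mul, Finset.sum_mul]
      refine Finset.sum_eq_zero fun i _ => ?_
      rw [Finset.mul_sum]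
      refine Finset.sum_eq_zero fun j _ => ?_
      have e2 : u i * p * v i * (x * b) * (u j * p * v j)
          = u i * (p * ((v i * x) * b * u j) * p) * v j := by
        simp only [mul_assoc]
      rw [e2, hcon]; simp
    unfold spectralRadius
    refine le_antisymm (iSup₂_le fun k hk => ?_) bot_le
    have h3 := spectrum.pow_mem_pow (x * b) 3 hk
    rw [hcube, spectrum.zero_eq, Set.mem_singleton_iff] at h3
    have : k = 0 := by simpa using h3
    simp [this]
  obtain ⟨x, y, hxy⟩ := key
  obtain ⟨lam, hlam⟩ := hpmin (x * b * y)
  have hl0 : lam ≠ 0 := by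
    rintro rfl
    exact hxy (by rw [hlam, zero_smul])
  have h1 : p * (x * b * y) * p ∈ I :=
    (hI _ (hI _ (hI _ (hI b hbI x).1 y).2 p).1 p).2
  have hpI : p ∈ I := by
    rw [hlam] at h1
    exact (Submodule.smul_mem_iff I hl0).1 h1
  refine Set.Subset.antisymm hIS ?_
  rw [hS]
  rintro a ⟨n, u, v, rfl⟩
  exact Submodule.sum_mem I fun j _ => (hI _ (hI p hpI (u j)).1 (v j)).2
end

section
/- Let n ≥ 1 and let f : M_n(ℂ) → ℂ be a linear functional on the algebra of n × n complex matrices. Then the following are equivalent: (a) there exists α ∈ ℂ such that f(a) = α · Tr(a) for all a; (b) f(a) = 0 for every nilpotent matrix a ∈ M_n(ℂ); (c) f(a) = 0 for every matrix a ∈ M_n(ℂ) with a² = 0. -/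
theorem stmt13_aux (n : ℕ) (hn : 1 ≤ n) (f : Matrix (Fin n) (Fin n) ℂ →ₗ[ℂ] ℂ)
    (h : ∀ a : Matrix (Fin n) (Fin n) ℂ, a ^ 2 = 0 → f a = 0) :
    ∃ α : ℂ, ∀ a : Matrix (Fin n) (Fin n) ℂ, f a = α * Matrix.trace a := by
  have h1 : ∀ i j : Fin n, i ≠ j → f (Matrix.single i j 1) = 0 := by
    intro i j hij
    apply h
    rw [pow_two, Matrix.single_mul_single_of_ne _ _ _ _ hij.symm]
  have h2 : ∀ i j : Fin n, f (Matrix.single i i 1) = f (Matrix.single j j 1) := by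
    intro i j
    by_cases hij : i = j
    · rw [hij]
    have := h (Matrix.single i i 1 - Matrix.single j j 1 + Matrix.single i j 1
      - Matrix.single j i 1) (by
        simp only [pow_two, mul_add, add_mul, mul_sub, sub_mul, Matrix.single_mul_single_same,
          Matrix.single_mul_single_of_ne _ _ _ _ hij,
          Matrix.single_mul_single_of_ne _ _ _ _ (Ne.symm hij), mul_one]
        abel)
    simp only [map_add, map_sub, h1 i j hij, h1 j i (Ne.symm hij)] at this
    linear_combination this
  refine ⟨f (Matrix.single ⟨0, hn⟩ ⟨0, hn⟩ 1), fun a => ?_⟩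
  have h3 : ∀ i j : Fin n, f (Matrix.single i j (a i j)) = a i j * f (Matrix.single i j 1) := by
    intro i j
    rw [← smul_eq_mul, ← map_smul, Matrix.smul_single, smul_eq_mul, mul_one]
  conv_lhs => rw [Matrix.matrix_eq_sum_single a]
  simp only [map_sum, h3, Matrix.trace, Matrix.diag, Finset.mul_sum]
  refine Finset.sum_congr rfl fun i _ => ?_
  rw [Finset.sum_eq_single i]
  · rw [h2 i ⟨0, hn⟩, mul_comm]
  · intro j _ hj
    rw [h1 i j (Ne.symm hj), mul_zero]
  · simp

theorem stmt13 (n : ℕ) (hn : 1 ≤ n) (f : Matrix (Fin n) (Fin n) ℂ →ₗ[ℂ] ℂ) :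
    ((∃ α : ℂ, ∀ a : Matrix (Fin n) (Fin n) ℂ, f a = α * Matrix.trace a) ↔
      (∀ a : Matrix (Fin n) (Fin n) ℂ, IsNilpotent a → f a = 0)) ∧
    ((∀ a : Matrix (Fin n) (Fin n) ℂ, IsNilpotent a → f a = 0) ↔
      (∀ a : Matrix (Fin n) (Fin n) ℂ, a ^ 2 = 0 → f a = 0)) := by
  have hab : (∃ α : ℂ, ∀ a : Matrix (Fin n) (Fin n) ℂ, f a = α * Matrix.trace a) →
      (∀ a : Matrix (Fin n) (Fin n) ℂ, IsNilpotent a → f a = 0) := by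
    rintro ⟨α, hα⟩ a ha
    rw [hα, (Matrix.isNilpotent_trace_of_isNilpotent ha).eq_zero, mul_zero]
  have hbc : (∀ a : Matrix (Fin n) (Fin n) ℂ, IsNilpotent a → f a = 0) →
      (∀ a : Matrix (Fin n) (Fin n) ℂ, a ^ 2 = 0 → f a = 0) :=
    fun h a ha => h a ⟨2, ha⟩
  have hca := stmt13_aux n hn f
  exact ⟨⟨hab, fun h => hca (hbc h)⟩, ⟨hbc, fun h => hab (hca h)⟩⟩
end

section
/- Let X be a complex Banach space and let P, Q be rank-one projections in B(X), i.e. continuous linear operators on X with P² = P, Q² = Q and whose ranges are one-dimensional. Then there exist continuous linear operators S, T on X, each with one-dimensional range, such that P − Q = S∘T − T∘S. -/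
theorem rank_one_proj_form {X : Type*} [NormedAddCommGroup X] [NormedSpace ℂ X]
    (P : X →L[ℂ] X) (hP : P ∘L P = P)
    (hPr : Module.finrank ℂ (LinearMap.range (P : X →ₗ[ℂ] X)) = 1) :
    ∃ (x : X) (f : X →L[ℂ] ℂ), x ≠ 0 ∧ f x = 1 ∧ P = f.smulRight x := by
  obtain ⟨⟨x, hx⟩, hx0, h⟩ := finrank_eq_one_iff'.1 hPr
  have hx0' : x ≠ 0 := fun h0 => hx0 (Subtype.ext h0)
  have hPx : P x = x := by
    obtain ⟨w, hw⟩ := hx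
    have hw' : P w = x := hw
    have := congrArg (fun A : X →L[ℂ] X => A w) hP
    simpa [hw'] using this
  obtain ⟨f, hf⟩ := SeparatingDual.exists_eq_one (R := ℂ) hx0'
  refine ⟨x, f ∘L P, hx0', by simp [hPx, hf], ?_⟩
  ext z
  obtain ⟨c, hc⟩ := h ⟨P z, ⟨z, rfl⟩⟩
  have hc' : c • x = P z := congrArg Subtype.val hc
  simp [← hc', hf]

theorem finrank_range_smulRight_one {X : Type*} [NormedAddCommGroup X] [NormedSpace ℂ X]
    (f : X →L[ℂ] ℂ) (x y : X) (hx : x ≠ 0) (hy : f y = 1) :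
    Module.finrank ℂ (LinearMap.range (f.smulRight x : X →ₗ[ℂ] X)) = 1 := by
  have : LinearMap.range (f.smulRight x : X →ₗ[ℂ] X) = Submodule.span ℂ {x} := by
    ext z
    rw [Submodule.mem_span_singleton]
    constructor
    · rintro ⟨w, rfl⟩
      exact ⟨f w, rfl⟩
    · rintro ⟨c, rfl⟩
      exact ⟨c • y, by simp [hy]⟩
  rw [this, finrank_span_singleton hx]

theorem stmt14 {X : Type*} [NormedAddCommGroup X] [NormedSpace ℂ X] [CompleteSpace X]
    (P Q : X →L[ℂ] X)
    (hP : P ∘L P = P) (hQ : Q ∘L Q = Q)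
    (hPr : Module.finrank ℂ (LinearMap.range (P : X →ₗ[ℂ] X)) = 1)
    (hQr : Module.finrank ℂ (LinearMap.range (Q : X →ₗ[ℂ] X)) = 1) :
    ∃ S T : X →L[ℂ] X,
      Module.finrank ℂ (LinearMap.range (S : X →ₗ[ℂ] X)) = 1 ∧
      Module.finrank ℂ (LinearMap.range (T : X →ₗ[ℂ] X)) = 1 ∧
      P - Q = S ∘L T - T ∘L S := by
  obtain ⟨x, f, hx, hf, rfl⟩ := rank_one_proj_form P hP hPr
  obtain ⟨y, g, hy, hg, rfl⟩ := rank_one_proj_form Q hQ hQr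
  refine ⟨g.smulRight x, f.smulRight y, finrank_range_smulRight_one g x y hx hg,
    finrank_range_smulRight_one f y x hy hf, ?_⟩
  ext z
  simp [hf, hg]
end
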